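/- Uniform Morawetz estimate: let n ≥ 3. There is a constant C depending only on n such that for every ε > 0 and every finite-energy solution φ of the homogeneous wave equation □φ = 0 on ℝ^{n+1}, ∫_{−∞}^{∞} ∫_{ℝⁿ} ( ε (ε+r)^{−2} |∂_r φ|² + (ε+r)^{−1} |∇̸ φ|² ) dx dt ≤ C ( ‖∇_x φ(0)‖²_{L²} + ‖∂_t φ(0)‖²_{L²} ), where r = |x|, ∂_r φ is the radial derivative, and |∇̸ φ|² = |∇_x φ|² − |∂_r φ|² is the squared angular part of the spatial gradient. The constant C is independent of ε. -/

import Mathlib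

open MeasureTheory Real Complex ENNReal
open scoped FourierTransform RealInnerProductSpace ComplexConjugate

noncomputable section

/-- Euclidean space `ℝⁿ`. -/
abbrev Eucl (n : ℕ) := EuclideanSpace ℝ (Fin n)

/-- A function on `ℝⁿ` is unit frequency if its Fourier transform is supported
in the annulus `1/2 < ‖ξ‖ < 2`. -/
def UnitFrequency {n : ℕ} (f : Eucl n → ℂ) : Prop :=
  ∀ ξ : Eucl n, 𝓕 f ξ ≠ 0 → 1 / 2 < ‖ξ‖ ∧ ‖ξ‖ < 2

/-- The half-wave propagator `e^{it√(−Δ)} f (x) = ∫ e^{2πit|ξ|} e^{2πi x·ξ} f̂(ξ) dξ`. -/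
def waveProp {n : ℕ} (f : Eucl n → ℂ) (t : ℝ) (x : Eucl n) : ℂ :=
  ∫ ξ : Eucl n,
    Complex.exp (2 * (π : ℂ) * Complex.I * (t : ℂ) * (‖ξ‖ : ℂ)) *
      Complex.exp (2 * (π : ℂ) * Complex.I * ((⟪x, ξ⟫ : ℝ) : ℂ)) * 𝓕 f ξ

/-- The mixed space-time norm `‖u‖_{L^q_t(L^r_x)}`. -/
def mixedNorm {n : ℕ} (q r : ℝ≥0∞) (u : ℝ → Eucl n → ℂ) : ℝ≥0∞ :=
  if q = ∞ then essSup (fun t : ℝ => eLpNorm (u t) r volume) volume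
  else (∫⁻ t : ℝ, eLpNorm (u t) r volume ^ q.toReal) ^ (1 / q.toReal)

/-- Time derivative of a space-time function. -/
def timeDeriv {n : ℕ} (u : ℝ → Eucl n → ℂ) (t : ℝ) (x : Eucl n) : ℂ :=
  deriv (fun s => u s x) t

/-- The spatial Laplacian `Δf(x) = Σᵢ ∂²f/∂xᵢ²`. -/
def lapE {n : ℕ} (f : Eucl n → ℂ) (x : Eucl n) : ℂ :=
  ∑ i : Fin n,
    fderiv ℝ (fun y => fderiv ℝ f y (EuclideanSpace.single i (1 : ℝ))) x
      (EuclideanSpace.single i (1 : ℝ))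

/-- `u` is a (classical, smooth) solution of the wave equation `□u = −∂ₜ²u + Δu = 0`. -/
def IsWaveSolution {n : ℕ} (u : ℝ → Eucl n → ℂ) : Prop :=
  ContDiff ℝ (⊤ : ℕ∞) (fun p : ℝ × Eucl n => u p.1 p.2) ∧
    ∀ t x, timeDeriv (timeDeriv u) t x = lapE (u t) x

/-- A spherically symmetric (radial) function. -/
def IsRadial {n : ℕ} (f : Eucl n → ℂ) : Prop :=
  ∀ x y : Eucl n, ‖x‖ = ‖y‖ → f x = f y

/-- The homogeneous Sobolev norm `‖f‖_{Ḣ^γ} = ‖ |ξ|^γ f̂ ‖_{L²}`. -/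
def homSobolevNorm {n : ℕ} (γ : ℝ) (f : Eucl n → ℂ) : ℝ≥0∞ :=
  eLpNorm (fun ξ : Eucl n => ((‖ξ‖ ^ γ : ℝ) : ℂ) * 𝓕 f ξ) 2 volume

/-- `H` is (the extension of) a spherical harmonic of degree `l` on `ℝⁿ`:
a smooth, harmonic, degree-`l` homogeneous function. -/
def IsSphericalHarmonic (n l : ℕ) (H : Eucl n → ℂ) : Prop :=
  ContDiff ℝ (⊤ : ℕ∞) H ∧ (∀ (c : ℝ) (x : Eucl n), H (c • x) = (c : ℂ) ^ l * H x) ∧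
    ∀ x, lapE H x = 0

/-- A function is localized at angular frequency `N` if its spherical harmonic
expansion only involves degrees `l` with `N/2 ≤ l ≤ 4N`. -/
def AngularlyLocalized (n N : ℕ) (f : Eucl n → ℂ) : Prop :=
  ∃ (I : Finset (ℕ × ℕ)) (Y : ℕ × ℕ → Eucl n → ℂ) (c : ℕ × ℕ → ℝ → ℂ),
    (∀ p ∈ I, ((N : ℝ) / 2 ≤ (p.1 : ℝ) ∧ (p.1 : ℝ) ≤ 4 * N) ∧
      IsSphericalHarmonic n p.1 (Y p)) ∧
    ∀ x : Eucl n, x ≠ 0 → f x = ∑ p ∈ I, c p ‖x‖ * Y p (‖x‖⁻¹ • x)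

/-- The normalized surface measure on the unit sphere `S^{n-1} ⊆ ℝⁿ`. -/
def unitSphereMeasure (n : ℕ) : Measure (Metric.sphere (0 : Eucl n) 1) :=
  (((volume : Measure (Eucl n)).toSphere Set.univ)⁻¹) • (volume : Measure (Eucl n)).toSphere

/-- An `L²`-type spherical harmonics expansion of a function `f` on `ℝⁿ`, with an
orthonormal family of spherical harmonics. -/
structure SphExpansion (n : ℕ) (f : Eucl n → ℂ) where
  /-- number of harmonics used in each degree -/
  d : ℕ → ℕ
  /-- the orthonormal family of spherical harmonics, `Y (l,i)` of degree `l` -/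
  Y : ℕ × ℕ → Eucl n → ℂ
  /-- the (radial) coefficients -/
  c : ℕ × ℕ → ℝ → ℂ
  harmonic : ∀ p : ℕ × ℕ, p.2 < d p.1 → IsSphericalHarmonic n p.1 (Y p)
  coeff_zero : ∀ p : ℕ × ℕ, ¬p.2 < d p.1 → ∀ r : ℝ, c p r = 0
  orthonormal : ∀ p q : ℕ × ℕ, p.2 < d p.1 → q.2 < d q.1 →
    ∫ ω : Metric.sphere (0 : Eucl n) 1,
        Y p (ω : Eucl n) * conj (Y q (ω : Eucl n)) ∂(unitSphereMeasure n) =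
      if p = q then 1 else 0
  expand : ∀ x : Eucl n, x ≠ 0 →
    f x = ∑' p : ℕ × ℕ, c p ‖x‖ * Y p (‖x‖⁻¹ • x)

/-- The fractional angular derivative `|Ω|^s f = Σ [l(n+l−2)]^{s/2} c^l_i Y^l_i`,
computed from a spherical harmonics expansion of `f`. -/
def SphExpansion.omegaPow {n : ℕ} {f : Eucl n → ℂ} (e : SphExpansion n f) (s : ℝ) :
    Eucl n → ℂ := fun x =>
  ∑' p : ℕ × ℕ,
    ((((p.1 * (n + p.1 - 2) : ℕ) : ℝ) ^ (s / 2) : ℝ) : ℂ) * e.c p ‖x‖ * e.Y p (‖x‖⁻¹ • x)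

/-- The Bessel function of order `s`, given by the integral formula
`J_s(y) = ((−i)^s/(4π)) ∫_{−2π}^{2π} e^{iy cos θ} e^{−isθ} dθ`. -/
def besselJ (s : ℝ) (y : ℝ) : ℂ :=
  (-Complex.I) ^ (s : ℂ) / (4 * (π : ℂ)) *
    ∫ θ in (-(2 * π) : ℝ)..(2 * π),
      Complex.exp (Complex.I * ((y * Real.cos θ : ℝ) : ℂ)) *
        Complex.exp (-(Complex.I * (s : ℂ) * (θ : ℂ)))

/-- The Hankel–φ wave packet `ψ^l_m(r) = ∫_0^∞ J_{(n−2)/2+l}(2πrρ) e^{−2πimρ} χ(ρ) dρ`. -/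
def hankelPsi (n : ℕ) (χ : ℝ → ℝ) (l : ℕ) (m r : ℝ) : ℂ :=
  ∫ ρ in Set.Ioi (0 : ℝ),
    besselJ (((n : ℝ) - 2) / 2 + l) (2 * π * r * ρ) *
      Complex.exp (-(2 * (π : ℂ) * Complex.I * (m : ℂ) * (ρ : ℂ))) * ((χ ρ : ℝ) : ℂ)

/-- `Q` is a partition of `ℝⁿ` into (axis-parallel, half-open) cubes of side length `∼ L`. -/
def IsCubePartition {ι : Type} (n : ℕ) (L : ℝ) (Q : ι → Set (Eucl n)) : Prop :=
  (∀ x : Eucl n, ∃! i : ι, x ∈ Q i) ∧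
    ∀ i : ι, ∃ (a : Eucl n) (s : ℝ), L / 2 ≤ s ∧ s ≤ 2 * L ∧
      Q i = {x : Eucl n | ∀ j : Fin n, a j ≤ x j ∧ x j < a j + s}

/-- The coarse scale norm `(Σ_α ‖f‖_{L²(Q_α)}^r)^{1/r}` over a family of cubes. -/
def cubeNorm {ι : Type} {n : ℕ} (Q : ι → Set (Eucl n)) (r : ℝ≥0∞) (f : Eucl n → ℂ) :
    ℝ≥0∞ :=
  if r = ∞ then ⨆ i : ι, eLpNorm f 2 (volume.restrict (Q i))
  else (∑' i : ι, eLpNorm f 2 (volume.restrict (Q i)) ^ r.toReal) ^ (1 / r.toReal)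

/-- The squared length of the spatial gradient, `|∇f(x)|² = Σᵢ |∂ᵢf(x)|²`. -/
def gradSq {n : ℕ} (f : Eucl n → ℂ) (x : Eucl n) : ℝ :=
  ∑ i : Fin n, ‖fderiv ℝ f x (EuclideanSpace.single i (1 : ℝ))‖ ^ 2

/-- The squared radial derivative `|∂_r f(x)|² = |(x/|x|)·∇f(x)|²`. -/
def radSq {n : ℕ} (f : Eucl n → ℂ) (x : Eucl n) : ℝ :=
  ‖fderiv ℝ f x (‖x‖⁻¹ • x)‖ ^ 2

end


namespace Mor

open Set Filter Topology

noncomputable section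

/-- space-time -/
abbrev ST (n : ℕ) := ℝ × Eucl n

/-- directional derivative -/
def D {n : ℕ} (v : ST n) (F : ST n → ℝ) : ST n → ℝ := fun p => fderiv ℝ F p v

/-- time direction -/
def eT (n : ℕ) : ST n := (1, 0)

/-- space directions -/
def eX {n : ℕ} (i : Fin n) : ST n := (0, EuclideanSpace.single i (1 : ℝ))

/-- smooth real solution -/
structure IsSol {n : ℕ} (U : ST n → ℝ) : Prop where
  smooth : ContDiff ℝ (⊤ : ℕ∞) U
  wave : ∀ p, D (eT n) (D (eT n) U) p = ∑ i, D (eX i) (D (eX i) U) p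

variable {n : ℕ}

lemma contDiff_D {F : ST n → ℝ} (hF : ContDiff ℝ (⊤ : ℕ∞) F) (v : ST n) :
    ContDiff ℝ (⊤ : ℕ∞) (D v F) := by
  unfold D
  exact (hF.fderiv_right (by exact_mod_cast le_top)).clm_apply contDiff_const

lemma continuous_D {F : ST n → ℝ} (hF : ContDiff ℝ 1 F) (v : ST n) :
    Continuous (D v F) := by
  unfold D
  exact (hF.continuous_fderiv one_ne_zero).clm_apply continuous_const

lemma D_comm {F : ST n → ℝ} (hF : ContDiff ℝ (⊤ : ℕ∞) F) (v w : ST n) (p : ST n) :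
    D v (D w F) p = D w (D v F) p := by
  have h := (hF.contDiffAt (x := p)).isSymmSndFDerivAt (by
    simp only [minSmoothness_of_isRCLikeNormedField]; exact WithTop.coe_le_coe.2 le_top)
  have hd : DifferentiableAt ℝ (fderiv ℝ F) p :=
    (hF.fderiv_right (m := (⊤ : ℕ∞)) (by exact_mod_cast le_top)).differentiable (by simp) p
  unfold D
  rw [fderiv_clm_apply hd (by fun_prop), fderiv_clm_apply hd (by fun_prop)]
  simpa using h.eq v w

lemma D_mul {F G : ST n → ℝ} {p : ST n} (hF : DifferentiableAt ℝ F p)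
    (hG : DifferentiableAt ℝ G p) (v : ST n) :
    D v (fun q => F q * G q) p = F p * D v G p + G p * D v F p := by
  unfold D; rw [fderiv_fun_mul hF hG]; simp

lemma D_add {F G : ST n → ℝ} {p : ST n} (hF : DifferentiableAt ℝ F p)
    (hG : DifferentiableAt ℝ G p) (v : ST n) :
    D v (fun q => F q + G q) p = D v F p + D v G p := by
  unfold D; rw [fderiv_fun_add hF hG]; simp

lemma D_sub {F G : ST n → ℝ} {p : ST n} (hF : DifferentiableAt ℝ F p)
    (hG : DifferentiableAt ℝ G p) (v : ST n) :
    D v (fun q => F q - G q) p = D v F p - D v G p := by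
  unfold D; rw [fderiv_fun_sub hF hG]; simp

lemma D_const_mul {F : ST n → ℝ} {p : ST n} (hF : DifferentiableAt ℝ F p) (c : ℝ)
    (v : ST n) :
    D v (fun q => c * F q) p = c * D v F p := by
  unfold D; rw [fderiv_const_mul hF]; simp

lemma D_sq {F : ST n → ℝ} {p : ST n} (hF : DifferentiableAt ℝ F p) (v : ST n) :
    D v (fun q => F q ^ 2) p = 2 * F p * D v F p := by
  have := D_mul hF hF v
  simp only [← pow_two] at this
  rw [this]; ring

lemma D_sum {F : Fin n → ST n → ℝ} {p : ST n} (hF : ∀ i, DifferentiableAt ℝ (F i) p)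
    (v : ST n) :
    D v (fun q => ∑ i, F i q) p = ∑ i, D v (F i) p := by
  unfold D; rw [fderiv_fun_sum (fun i _ => hF i)]; simp

lemma D_coord (i : Fin n) (v : ST n) (p : ST n) :
    D v (fun q => q.2 i) p = v.2 i := by
  have : (fun q : ST n => q.2 i) =
    ((EuclideanSpace.proj i : Eucl n →L[ℝ] ℝ).comp (ContinuousLinearMap.snd ℝ ℝ (Eucl n))) := by
    ext q; simp
  unfold D
  rw [this, ContinuousLinearMap.fderiv]
  simp

lemma D_radial {K : ℝ → ℝ} {K' : ℝ} {p : ST n} (hK : HasDerivAt K K' (‖p.2‖ ^ 2)) (v : ST n) :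
    D v (fun q => K (‖q.2‖ ^ 2)) p = 2 * ⟪p.2, v.2⟫ * K' := by
  have h1 : HasFDerivAt (fun q : ST n => ‖q.2‖ ^ 2)
      (2 • (innerSL ℝ p.2).comp (ContinuousLinearMap.snd ℝ ℝ (Eucl n))) p :=
    (hasFDerivAt_snd (𝕜 := ℝ) (p := p)).norm_sq
  have h2 := hK.comp_hasFDerivAt p h1
  unfold D
  rw [show (fun q : ST n => K (‖q.2‖ ^ 2)) = K ∘ (fun q : ST n => ‖q.2‖ ^ 2) from rfl, h2.fderiv]
  simp
  ring

lemma inner_single_r (x : Eucl n) (i : Fin n) :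
    ⟪x, EuclideanSpace.single i (1 : ℝ)⟫ = x i := by
  simp [EuclideanSpace.inner_single_right]

lemma slice_fderiv {F : ST n → ℝ} {t : ℝ} {x : Eucl n} (hF : DifferentiableAt ℝ F (t, x))
    (v : Eucl n) : fderiv ℝ (fun y => F (t, y)) x v = D (0, v) F (t, x) := by
  have h : HasFDerivAt (fun y : Eucl n => (t, y)) (ContinuousLinearMap.inr ℝ ℝ (Eucl n)) x :=
    hasFDerivAt_prodMk_right t x
  have := hF.hasFDerivAt.comp x h
  unfold D
  rw [show (fun y => F (t, y)) = F ∘ (fun y : Eucl n => (t, y)) from rfl, this.fderiv]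
  simp

lemma slice_hasDerivAt {F : ST n → ℝ} {t : ℝ} {x : Eucl n} (hF : DifferentiableAt ℝ F (t, x)) :
    HasDerivAt (fun s => F (s, x)) (D (eT n) F (t, x)) t := by
  have h : HasFDerivAt (fun s : ℝ => (s, x)) (ContinuousLinearMap.inl ℝ ℝ (Eucl n)) t :=
    hasFDerivAt_prodMk_left t x
  have := (hF.hasFDerivAt.comp t h).hasDerivAt
  simpa [D, eT, Function.comp_def] using this

lemma integral_fderiv_zero {f : Eucl n → ℝ} (hf : ContDiff ℝ 1 f) (hs : HasCompactSupport f)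
    (v : Eucl n) : ∫ x, fderiv ℝ f x v = 0 := by
  have hc : Continuous (fun x => fderiv ℝ f x v) :=
    (hf.continuous_fderiv one_ne_zero).clm_apply continuous_const
  have hs' : HasCompactSupport (fun x => fderiv ℝ f x v) := by
    refine (hs.fderiv (𝕜 := ℝ)).mono fun x hx => ?_
    simp only [Function.mem_support, ne_eq] at hx ⊢
    intro h; apply hx; simp [h]
  have := integral_mul_fderiv_eq_neg_fderiv_mul_of_integrable (μ := (volume : Measure (Eucl n)))
    (𝕜 := ℝ) (f := fun _ => (1 : ℝ)) (g := f) (v := v)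
    (by simp) (by simpa using hc.integrable_of_hasCompactSupport hs')
    (by simpa using hf.continuous.integrable_of_hasCompactSupport hs)
    (fun x _ => by fun_prop) (fun x _ => hf.differentiable one_ne_zero x)
  simpa using this

lemma hasCompactSupport_of_ball {f : Eucl n → ℝ} {ρ : ℝ} (h : ∀ x, ρ ≤ ‖x‖ → f x = 0) :
    HasCompactSupport f := by
  refine HasCompactSupport.intro (isCompact_closedBall (0 : Eucl n) ρ) fun x hx => h x ?_
  simp at hx; exact hx.le

/-- continuous functions supported in a cylinder are integrable on slabs -/
lemma integrable_slab {f : ST n → ℝ} (hf : Continuous f) {a b ρ : ℝ}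
    (h : ∀ t ∈ Icc a b, ∀ x, ρ ≤ ‖x‖ → f (t, x) = 0) :
    Integrable f ((volume.restrict (Ioc a b)).prod volume) := by
  have hK : IsCompact (Icc a b ×ˢ Metric.closedBall (0 : Eucl n) ρ) :=
    isCompact_Icc.prod (isCompact_closedBall _ _)
  have h1 : IntegrableOn f (Icc a b ×ˢ Metric.closedBall (0 : Eucl n) ρ)
      (volume.prod volume) := hf.continuousOn.integrableOn_compact hK
  have h2 : IntegrableOn f (Ioc a b ×ˢ univ) (volume.prod volume) := by
    refine IntegrableOn.of_forall_sdiff_eq_zero h1 (measurableSet_Ioc.prod MeasurableSet.univ) ?_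
    rintro ⟨t, x⟩ ⟨⟨h1, -⟩, h2⟩
    refine h t (Ioc_subset_Icc_self h1) x ?_
    by_contra hlt
    exact h2 ⟨Ioc_subset_Icc_self h1, by simp; linarith⟩
  have h3 := Measure.prod_restrict (μ := (volume : Measure ℝ)) (ν := (volume : Measure (Eucl n)))
    (Ioc a b) univ
  rw [Measure.restrict_univ] at h3
  rw [h3]; exact h2

/-- space-time divergence theorem -/
lemma div_lemma {P : ST n → ℝ} {Q : Fin n → ST n → ℝ} (hP : ContDiff ℝ 1 P)
    (hQ : ∀ i, ContDiff ℝ 1 (Q i)) {a b ρ : ℝ} (hab : a ≤ b)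
    (hP0 : ∀ t, a - 1 < t → ∀ x, ρ ≤ ‖x‖ → P (t, x) = 0)
    (hQ0 : ∀ i, ∀ t, a - 1 < t → ∀ x, ρ ≤ ‖x‖ → Q i (t, x) = 0) :
    ∫ t in a..b, ∫ x, (D (eT n) P (t, x) - ∑ i, D (eX i) (Q i) (t, x)) =
      (∫ x, P (b, x)) - ∫ x, P (a, x) := by
  have hDP0 : ∀ t, a - 1 < t → ∀ x, ρ ≤ ‖x‖ → D (eT n) P (t, x) = 0 := by
    intro t ht x hx
    have h1 := slice_hasDerivAt (hP.differentiable one_ne_zero (t, x))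
    refine h1.unique ((hasDerivAt_const t (0 : ℝ)).congr_of_eventuallyEq ?_)
    filter_upwards [lt_mem_nhds ht] with s hs using hP0 s hs x hx
  have hDPs : ∀ t, a - 1 < t → HasCompactSupport (fun x => D (eT n) P (t, x)) :=
    fun t ht => hasCompactSupport_of_ball (hDP0 t ht)
  have hcP := continuous_D hP (eT n)
  have key : ∀ t ∈ Icc a b, ∫ x, (D (eT n) P (t, x) - ∑ i, D (eX i) (Q i) (t, x)) =
      ∫ x, D (eT n) P (t, x) := by
    intro t ht
    have ht' : a - 1 < t := by linarith [ht.1]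
    have hq : ∀ i, (fun x => D (eX i) (Q i) (t, x)) =
        fun x => fderiv ℝ (fun y => Q i (t, y)) x (EuclideanSpace.single i (1 : ℝ)) := by
      intro i; ext x
      rw [slice_fderiv ((hQ i).differentiable one_ne_zero _)]; rfl
    have hqs : ∀ i, HasCompactSupport (fun y => Q i (t, y)) :=
      fun i => hasCompactSupport_of_ball (hQ0 i t ht')
    have hqc : ∀ i, ContDiff ℝ 1 (fun y => Q i (t, y)) := fun i =>
      (hQ i).comp (contDiff_const.prodMk contDiff_id)
    have hqi : ∀ i, Integrable (fun x => D (eX i) (Q i) (t, x)) := by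
      intro i
      refine Continuous.integrable_of_hasCompactSupport ?_ ?_
      · exact (continuous_D (hQ i) _).comp (by fun_prop)
      · rw [hq i]
        refine ((hqs i).fderiv (𝕜 := ℝ)).mono fun x hx => ?_
        simp only [Function.mem_support, ne_eq] at hx ⊢
        intro h; apply hx; simp [h]
    rw [integral_sub, integral_finsetSum _ (fun i _ => hqi i)]
    · have : ∀ i, ∫ x, D (eX i) (Q i) (t, x) = 0 := by
        intro i; rw [hq i]; exact integral_fderiv_zero (hqc i) (hqs i) _
      simp [this]
    · exact (hcP.comp (by fun_prop)).integrable_of_hasCompactSupport (hDPs t ht')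
    · exact integrable_finsetSum _ fun i _ => hqi i
  rw [intervalIntegral.integral_congr (g := fun t => ∫ x, D (eT n) P (t, x))
    (fun t ht => key t (by rwa [uIcc_of_le hab] at ht))]
  rw [intervalIntegral_integral_swap]
  · have : ∀ x, ∫ t in a..b, D (eT n) P (t, x) = P (b, x) - P (a, x) := by
      intro x
      refine intervalIntegral.integral_eq_sub_of_hasDerivAt (f := fun s => P (s, x))
        (fun t _ => slice_hasDerivAt (hP.differentiable one_ne_zero _)) ?_
      exact (hcP.comp (by fun_prop : Continuous fun t : ℝ => (t, x))).intervalIntegrable _ _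
    simp_rw [this]
    rw [integral_sub]
    · exact (hP.continuous.comp (by fun_prop)).integrable_of_hasCompactSupport
        (hasCompactSupport_of_ball (hP0 b (by linarith)))
    · exact (hP.continuous.comp (by fun_prop)).integrable_of_hasCompactSupport
        (hasCompactSupport_of_ball (hP0 a (by linarith)))
  · rw [uIoc_of_le hab]
    exact integrable_slab hcP (fun t ht => hDP0 t (by linarith [ht.1]))

end

end Mor


namespace Mor

open Set Filter Topology

noncomputable section

variable {n : ℕ}

/-- squared spatial gradient -/
def Nn (U : ST n → ℝ) (p : ST n) : ℝ := ∑ i, (D (eX i) U p) ^ 2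

/-- energy density -/
def en (U : ST n → ℝ) (p : ST n) : ℝ := (D (eT n) U p) ^ 2 + Nn U p

lemma Nn_nonneg (U : ST n → ℝ) (p : ST n) : 0 ≤ Nn U p :=
  Finset.sum_nonneg fun _ _ => sq_nonneg _

lemma en_nonneg (U : ST n → ℝ) (p : ST n) : 0 ≤ en U p :=
  add_nonneg (sq_nonneg _) (Nn_nonneg U p)

lemma contDiff_Nn {U : ST n → ℝ} (hU : ContDiff ℝ (⊤ : ℕ∞) U) :
    ContDiff ℝ (⊤ : ℕ∞) (Nn U) := by
  unfold Nn
  exact ContDiff.sum fun i _ => (contDiff_D hU _).pow 2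

lemma contDiff_en {U : ST n → ℝ} (hU : ContDiff ℝ (⊤ : ℕ∞) U) :
    ContDiff ℝ (⊤ : ℕ∞) (en U) := by
  unfold en
  exact ((contDiff_D hU _).pow 2).add (contDiff_Nn hU)

/-- Cauchy-Schwarz -/
lemma dot_sq_le (x : Eucl n) (a : Fin n → ℝ) :
    (∑ i, x i * a i) ^ 2 ≤ ‖x‖ ^ 2 * ∑ i, a i ^ 2 := by
  have := Finset.sum_mul_sq_le_sq_mul_sq Finset.univ (fun i => x i) a
  rwa [EuclideanSpace.real_norm_sq_eq]

/-- cutoff -/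
def psi (a : ℝ) : ℝ := Real.smoothTransition (2 - a)

lemma contDiff_psi : ContDiff ℝ (⊤ : ℕ∞) psi := by
  unfold psi
  exact Real.smoothTransition.contDiff.comp (contDiff_const.sub contDiff_id)

lemma psi_one {a : ℝ} (h : a ≤ 1) : psi a = 1 :=
  Real.smoothTransition.one_of_one_le (by linarith)

lemma psi_zero {a : ℝ} (h : 2 ≤ a) : psi a = 0 :=
  Real.smoothTransition.zero_of_nonpos (by linarith)

lemma psi_nonneg (a : ℝ) : 0 ≤ psi a := Real.smoothTransition.nonneg _

lemma psi_le_one (a : ℝ) : psi a ≤ 1 := Real.smoothTransition.le_one _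

lemma psi_antitone : Antitone psi := fun a b h =>
  Real.smoothTransition.monotone (by linarith)

lemma deriv_psi_nonpos (a : ℝ) : deriv psi a ≤ 0 := psi_antitone.deriv_nonpos

lemma psi_hasDerivAt (a : ℝ) : HasDerivAt psi (deriv psi a) a :=
  (contDiff_psi.differentiable (by simp) a).hasDerivAt

/-- light-cone cutoff phase -/
def cphase (R : ℝ) (p : ST n) : ℝ := √(1 + ‖p.2‖ ^ 2) + (p.1 - R)

lemma contDiff_cphase (R : ℝ) : ContDiff ℝ (⊤ : ℕ∞) (cphase R : ST n → ℝ) := by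
  unfold cphase
  refine ContDiff.add (ContDiff.sqrt ?_ ?_) (contDiff_fst.sub contDiff_const)
  · exact contDiff_const.add (contDiff_snd.norm_sq ℝ)
  · intro x; positivity

lemma D_cphase (R : ℝ) (p v : ST n) :
    D v (cphase R) p = ⟪p.2, v.2⟫ / √(1 + ‖p.2‖ ^ 2) + v.1 := by
  have hpos : (0:ℝ) < 1 + ‖p.2‖ ^ 2 := by positivity
  have h1 : HasDerivAt (fun σ : ℝ => √(1 + σ)) (1 / (2 * √(1 + ‖p.2‖ ^ 2))) (‖p.2‖ ^ 2) := by
    exact ((hasDerivAt_id _).const_add 1).sqrt hpos.ne'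
  have h2 : D v (fun q : ST n => q.1 - R) p = v.1 := by
    unfold D
    rw [fderiv_sub_const, fderiv_fst]; simp
  unfold cphase
  rw [D_add (F := fun q : ST n => √(1 + ‖q.2‖ ^ 2)) (G := fun q : ST n => q.1 - R), h2,
    D_radial (K := fun σ => √(1 + σ)) h1]
  · have := (Real.sqrt_pos.2 hpos).ne'
    field_simp
  · have : ContDiff ℝ (⊤ : ℕ∞) (fun q : ST n => √(1 + ‖q.2‖ ^ 2)) :=
      ContDiff.sqrt (contDiff_const.add (contDiff_snd.norm_sq ℝ)) (fun x => by positivity)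
    exact this.differentiable (by simp) p
  · fun_prop

lemma D_psi_cphase (R : ℝ) (p v : ST n) :
    D v (fun q => psi (cphase R q)) p =
      deriv psi (cphase R p) * (⟪p.2, v.2⟫ / √(1 + ‖p.2‖ ^ 2) + v.1) := by
  have h1 : HasFDerivAt (cphase R : ST n → ℝ) (fderiv ℝ (cphase R) p) p :=
    ((contDiff_cphase R).differentiable (by simp) p).hasFDerivAt
  have h := (psi_hasDerivAt (cphase R p)).comp_hasFDerivAt p h1
  rw [← D_cphase R]
  unfold D
  rw [show (fun q : ST n => psi (cphase R q)) = psi ∘ cphase R from rfl, h.fderiv]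
  simp

lemma energy_cutoff {U : ST n → ℝ} (hU : IsSol U) {T R : ℝ} (hT : 0 ≤ T) :
    ∫ x, psi (cphase R (T, x)) * en U (T, x) ≤ ∫ x, psi (cphase R (0, x)) * en U (0, x) := by
  have hη : ContDiff ℝ (⊤ : ℕ∞) (fun q : ST n => psi (cphase R q)) :=
    contDiff_psi.comp (contDiff_cphase R)
  have hs := hU.smooth
  have hT1 := contDiff_D hs (eT n)
  have hX1 := fun i : Fin n => contDiff_D hs (eX i)
  have hle : (1 : WithTop ℕ∞) ≤ ((⊤ : ℕ∞) : WithTop ℕ∞) := WithTop.coe_le_coe.2 le_top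
  have hzero : ∀ t, (0:ℝ) - 1 < t → ∀ x : Eucl n, |R| + 4 ≤ ‖x‖ → psi (cphase R (t, x)) = 0 := by
    intro t ht x hx
    apply psi_zero
    have : ‖x‖ ≤ √(1 + ‖x‖ ^ 2) := Real.le_sqrt_of_sq_le (by linarith)
    simp only [cphase]
    linarith [le_abs_self R]
  have key := div_lemma (P := fun p => psi (cphase R p) * en U p)
    (Q := fun i p => (2 * psi (cphase R p)) * (D (eT n) U p * D (eX i) U p))
    (a := 0) (b := T) (ρ := |R| + 4)
    ((hη.mul (contDiff_en hs)).of_le hle)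
    (fun i => ((contDiff_const.mul hη).mul (hT1.mul (hX1 i))).of_le hle) hT
    (fun t ht x hx => by simp [hzero t ht x hx])
    (fun i t ht x hx => by simp [hzero t ht x hx])
  rw [← sub_nonpos, ← key]
  have hd : ∀ {F : ST n → ℝ} (_ : ContDiff ℝ (⊤ : ℕ∞) F) (p), DifferentiableAt ℝ F p :=
    fun h p => h.differentiable (by simp) p
  have hpt : ∀ p : ST n, D (eT n) (fun p => psi (cphase R p) * en U p) p -
      ∑ i, D (eX i) (fun p => (2 * psi (cphase R p)) * (D (eT n) U p * D (eX i) U p)) p ≤ 0 := by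
    intro p
    set c := deriv psi (cphase R p) with hc
    have hc0 : c ≤ 0 := deriv_psi_nonpos _
    set s := √(1 + ‖p.2‖ ^ 2) with hsdef
    have hspos : 0 < s := Real.sqrt_pos.2 (by positivity)
    have hs2 : s ^ 2 = 1 + ‖p.2‖ ^ 2 := Real.sq_sqrt (by positivity)
    have e1 : D (eT n) (fun p => psi (cphase R p) * en U p) p =
        c * en U p + psi (cphase R p) * (2 * D (eT n) U p * D (eT n) (D (eT n) U) p +
          ∑ i, 2 * D (eX i) U p * D (eX i) (D (eT n) U) p) := by
      rw [D_mul (hd hη p) (hd (contDiff_en hs) p), D_psi_cphase]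
      have : D (eT n) (en U) p = 2 * D (eT n) U p * D (eT n) (D (eT n) U) p +
          ∑ i, 2 * D (eX i) U p * D (eX i) (D (eT n) U) p := by
        unfold en Nn
        rw [D_add (hd (hT1.pow 2) p) (hd (ContDiff.sum fun i _ => (hX1 i).pow 2) p),
          D_sq (hd hT1 p), D_sum (fun i => hd ((hX1 i).pow 2) p)]
        congr 1
        refine Finset.sum_congr rfl fun i _ => ?_
        rw [D_sq (hd (hX1 i) p), D_comm hs]
      rw [this]
      simp [eT, ← hc]
      ring
    have e2 : ∀ i, D (eX i) (fun p => (2 * psi (cphase R p)) * (D (eT n) U p * D (eX i) U p)) p =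
        2 * c * D (eT n) U p / s * (p.2 i * D (eX i) U p) +
        psi (cphase R p) * (2 * D (eX i) U p * D (eX i) (D (eT n) U) p) +
        (2 * psi (cphase R p) * D (eT n) U p) * D (eX i) (D (eX i) U) p := by
      intro i
      rw [D_mul (hd (contDiff_const.mul hη) p) (hd (hT1.mul (hX1 i)) p),
        D_mul (hd hT1 p) (hd (hX1 i) p), D_const_mul (hd hη p), D_psi_cphase]
      simp only [eX, inner_single_r, ← hc, ← hsdef]
      field_simp
      ring
    simp_rw [e2]
    rw [e1, hU.wave p, Finset.sum_add_distrib, Finset.sum_add_distrib, ← Finset.mul_sum,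
      ← Finset.mul_sum, ← Finset.mul_sum]
    set A := ∑ i, p.2 i * D (eX i) U p with hA
    have hA2 : A ^ 2 ≤ ‖p.2‖ ^ 2 * Nn U p := dot_sq_le _ _
    have hN := Nn_nonneg U p
    have hm : 2 * D (eT n) U p / s * A ≤ en U p := by
      have h1 : (A / s) ^ 2 ≤ Nn U p := by
        rw [div_pow, div_le_iff₀ (by positivity), hs2]; nlinarith
      have h2 : 2 * D (eT n) U p / s * A = 2 * D (eT n) U p * (A / s) := by ring
      rw [h2]; unfold en
      nlinarith [sq_nonneg (D (eT n) U p - A / s)]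
    have : c * (en U p - 2 * D (eT n) U p / s * A) ≤ 0 :=
      mul_nonpos_of_nonpos_of_nonneg hc0 (by linarith)
    calc _ = c * (en U p - 2 * D (eT n) U p / s * A) := by ring
      _ ≤ 0 := this
  have h0 := intervalIntegral.integral_nonneg (μ := volume) (f := fun t => -∫ x, (D (eT n) (fun p => psi (cphase R p) * en U p) (t, x) -
      ∑ i, D (eX i) (fun p => (2 * psi (cphase R p)) * (D (eT n) U p * D (eX i) U p)) (t, x))) hT
      (fun t _ => by
        rw [neg_nonneg]
        exact integral_nonpos fun x => hpt (t, x))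
  rw [intervalIntegral.integral_neg] at h0
  linarith

lemma bounded_exhaust {f : Eucl n → ℝ} (hf : Continuous f) (h0 : ∀ x, 0 ≤ f x) {C : ℝ}
    (h : ∀ k : ℕ, ∫ x in Metric.closedBall 0 (k:ℝ), f x ≤ C) :
    Integrable f ∧ ∫ x, f x ≤ C := by
  have hφ : AECover volume atTop (fun k : ℕ => Metric.closedBall (0 : Eucl n) (k:ℝ)) :=
    aecover_closedBall tendsto_natCast_atTop_atTop
  have hi : Integrable f := hφ.integrable_of_integral_bounded_of_nonneg_ae C
    (fun k => hf.continuousOn.integrableOn_compact (isCompact_closedBall _ _))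
    (Eventually.of_forall h0) (Eventually.of_forall h)
  exact ⟨hi, le_of_tendsto (hφ.integral_tendsto_of_countably_generated hi)
    (Eventually.of_forall h)⟩

lemma energy {U : ST n → ℝ} (hU : IsSol U) (h0 : Integrable (fun x => en U (0, x))) {T : ℝ}
    (hT : 0 ≤ T) :
    Integrable (fun x => en U (T, x)) ∧ ∫ x, en U (T, x) ≤ ∫ x, en U (0, x) := by
  have hc : ∀ t : ℝ, Continuous (fun x => en U (t, x)) := fun t =>
    (contDiff_en hU.smooth).continuous.comp (by fun_prop)
  have hψc : ∀ (R t : ℝ), Continuous (fun x : Eucl n => psi (cphase R (t, x))) := fun R t =>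
    (contDiff_psi.continuous.comp (contDiff_cphase R).continuous).comp (by fun_prop)
  refine bounded_exhaust (hc T) (fun x => en_nonneg U _) fun k => ?_
  set R : ℝ := k + T + 1
  have h1 := energy_cutoff hU (R := R) hT
  have h2 : ∫ x, psi (cphase R (0, x)) * en U (0, x) ≤ ∫ x, en U (0, x) := by
    refine integral_mono_of_nonneg (Eventually.of_forall fun x =>
      mul_nonneg (psi_nonneg _) (en_nonneg _ _)) h0 (Eventually.of_forall fun x => ?_)
    exact mul_le_of_le_one_left (en_nonneg _ _) (psi_le_one _)
  have h3 : Integrable (fun x => psi (cphase R (T, x)) * en U (T, x)) := by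
    refine ((hψc R T).mul (hc T)).integrable_of_hasCompactSupport ?_
    refine hasCompactSupport_of_ball (ρ := R + 2) fun x hx => ?_
    have : ‖x‖ ≤ √(1 + ‖x‖ ^ 2) := Real.le_sqrt_of_sq_le (by linarith)
    show psi (cphase R (T, x)) * en U (T, x) = 0
    rw [psi_zero, zero_mul]
    simp only [cphase]; linarith
  have h4 : ∫ x in Metric.closedBall 0 (k:ℝ), en U (T, x) ≤
      ∫ x in Metric.closedBall 0 (k:ℝ), psi (cphase R (T, x)) * en U (T, x) := by
    refine setIntegral_mono_on ((hc T).continuousOn.integrableOn_compact (isCompact_closedBall _ _))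
      h3.integrableOn measurableSet_closedBall fun x hx => ?_
    rw [psi_one, one_mul]
    simp only [cphase, R]
    have hx' : ‖x‖ ≤ k := by simpa using hx
    have : √(1 + ‖x‖ ^ 2) ≤ 1 + k := by
      refine Real.sqrt_le_iff.2 ⟨by positivity, ?_⟩
      nlinarith [norm_nonneg x]
    linarith
  have h5 := setIntegral_le_integral (s := Metric.closedBall 0 (k:ℝ)) h3
    (Eventually.of_forall fun x => mul_nonneg (psi_nonneg _) (en_nonneg _ _))
  linarith

end

end Mor


namespace Mor

open Set Filter Topology

noncomputable section

variable {n : ℕ}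

/-- `x · ∇ u` -/
def Aa (U : ST n → ℝ) (p : ST n) : ℝ := ∑ i, p.2 i * D (eX i) U p

lemma Aa_sq_le (U : ST n → ℝ) (p : ST n) : Aa U p ^ 2 ≤ ‖p.2‖ ^ 2 * Nn U p :=
  dot_sq_le _ _

lemma contDiff_coord (i : Fin n) : ContDiff ℝ (⊤ : ℕ∞) (fun p : ST n => p.2 i) := by
  fun_prop

lemma contDiff_Aa {U : ST n → ℝ} (hU : ContDiff ℝ (⊤ : ℕ∞) U) :
    ContDiff ℝ (⊤ : ℕ∞) (Aa U) := by
  unfold Aa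
  exact ContDiff.sum fun i _ => (contDiff_coord i).mul (contDiff_D hU _)

/-- momentum density -/
def Pm (K F : ℝ → ℝ) (U : ST n → ℝ) (p : ST n) : ℝ :=
  D (eT n) U p * (K (‖p.2‖ ^ 2) * Aa U p + F (‖p.2‖ ^ 2) * U p)

/-- flux -/
def Qm (K F F1 : ℝ → ℝ) (U : ST n → ℝ) (j : Fin n) (p : ST n) : ℝ :=
  D (eX j) U p * (K (‖p.2‖ ^ 2) * Aa U p + F (‖p.2‖ ^ 2) * U p) +
    p.2 j * (K (‖p.2‖ ^ 2) * ((1/2) * ((D (eT n) U p) ^ 2 - Nn U p)) -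
      F1 (‖p.2‖ ^ 2) * (U p) ^ 2)

lemma mor_identity {U : ST n → ℝ} (hU : IsSol U) {K F F1 : ℝ → ℝ} {k' f2 : ℝ} (p : ST n)
    (hK : HasDerivAt K k' (‖p.2‖ ^ 2)) (hF : HasDerivAt F (F1 (‖p.2‖ ^ 2)) (‖p.2‖ ^ 2))
    (hF1 : HasDerivAt F1 f2 (‖p.2‖ ^ 2)) :
    D (eT n) (Pm K F U) p - ∑ j, D (eX j) (Qm K F F1 U j) p =
      -(K (‖p.2‖ ^ 2) * Nn U p + 2 * k' * Aa U p ^ 2) +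
      ((1/2) * (n * K (‖p.2‖ ^ 2) + 2 * ‖p.2‖ ^ 2 * k') - F (‖p.2‖ ^ 2)) *
        (Nn U p - (D (eT n) U p) ^ 2) +
      U p ^ 2 * (n * F1 (‖p.2‖ ^ 2) + 2 * ‖p.2‖ ^ 2 * f2) := by
  have hs := hU.smooth
  have hd : ∀ {F : ST n → ℝ} (_ : ContDiff ℝ (⊤ : ℕ∞) F) (p), DifferentiableAt ℝ F p :=
    fun h p => h.differentiable (by simp) p
  have hT1 := contDiff_D hs (eT n)
  have hX1 := fun i : Fin n => contDiff_D hs (eX i)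
  have hNs : DifferentiableAt ℝ (fun q : ST n => ‖q.2‖ ^ 2) p :=
    hd (contDiff_snd.norm_sq ℝ) p
  have dK : DifferentiableAt ℝ (fun q : ST n => K (‖q.2‖ ^ 2)) p :=
    hK.differentiableAt.comp p hNs
  have dF : DifferentiableAt ℝ (fun q : ST n => F (‖q.2‖ ^ 2)) p :=
    hF.differentiableAt.comp p hNs
  have dF1 : DifferentiableAt ℝ (fun q : ST n => F1 (‖q.2‖ ^ 2)) p :=
    hF1.differentiableAt.comp p hNs
  have dA := hd (contDiff_Aa hs) p
  have dU := hd hs p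
  have dN := hd (contDiff_Nn hs) p
  have dT := hd hT1 p
  have dX := fun i => hd (hX1 i) p
  have dC := fun i : Fin n => hd (contDiff_coord i) p
  set σ := ‖p.2‖ ^ 2 with hσ
  have DKT : D (eT n) (fun q : ST n => K (‖q.2‖ ^ 2)) p = 0 := by
    rw [D_radial hK]; simp [eT]
  have DFT : D (eT n) (fun q : ST n => F (‖q.2‖ ^ 2)) p = 0 := by
    rw [D_radial hF]; simp [eT]
  have DKX : ∀ j, D (eX j) (fun q : ST n => K (‖q.2‖ ^ 2)) p = 2 * p.2 j * k' := by
    intro j; rw [D_radial hK]; simp only [eX, inner_single_r]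
  have DFX : ∀ j, D (eX j) (fun q : ST n => F (‖q.2‖ ^ 2)) p = 2 * p.2 j * F1 σ := by
    intro j; rw [D_radial hF]; simp only [eX, inner_single_r]
  have DF1X : ∀ j, D (eX j) (fun q : ST n => F1 (‖q.2‖ ^ 2)) p = 2 * p.2 j * f2 := by
    intro j; rw [D_radial hF1]; simp only [eX, inner_single_r]
  have DAT : D (eT n) (Aa U) p = ∑ i, p.2 i * D (eX i) (D (eT n) U) p := by
    unfold Aa
    rw [D_sum (fun i => (dC i).fun_mul (dX i))]
    refine Finset.sum_congr rfl fun i _ => ?_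
    rw [D_mul (dC i) (dX i), D_coord, D_comm hs]; simp [eT]
  have DAX : ∀ j, D (eX j) (Aa U) p = D (eX j) U p + ∑ i, p.2 i * D (eX j) (D (eX i) U) p := by
    intro j
    unfold Aa
    rw [D_sum (fun i => (dC i).fun_mul (dX i))]
    have : ∀ i, D (eX j) (fun q => q.2 i * D (eX i) U q) p =
        p.2 i * D (eX j) (D (eX i) U) p + (if i = j then D (eX i) U p else 0) := by
      intro i
      rw [D_mul (dC i) (dX i), D_coord]
      simp [eX]
    simp_rw [this]
    rw [Finset.sum_add_distrib, Finset.sum_ite_eq' Finset.univ j (fun i => D (eX i) U p)]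
    simp [add_comm]
  have DNX : ∀ j, D (eX j) (Nn U) p = 2 * ∑ i, D (eX i) U p * D (eX j) (D (eX i) U) p := by
    intro j
    unfold Nn
    rw [D_sum (fun i => (dX i).fun_pow 2), Finset.mul_sum]
    refine Finset.sum_congr rfl fun i _ => ?_
    rw [D_sq (dX i)]; ring
  have e1 : D (eT n) (Pm K F U) p = D (eT n) (D (eT n) U) p * (K σ * Aa U p + F σ * U p) +
      D (eT n) U p * (K σ * (∑ i, p.2 i * D (eX i) (D (eT n) U) p) + F σ * D (eT n) U p) := by
    unfold Pm
    rw [D_mul dT ((dK.fun_mul dA).fun_add (dF.fun_mul dU)), D_add (dK.fun_mul dA) (dF.fun_mul dU), D_mul dK dA,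
      D_mul dF dU, DKT, DFT, DAT]
    ring
  have e2 : ∀ j, D (eX j) (Qm K F F1 U j) p =
      (K σ * Aa U p + F σ * U p) * D (eX j) (D (eX j) U) p +
      (2 * k' * Aa U p) * (p.2 j * D (eX j) U p) + (K σ + F σ) * (D (eX j) U p) ^ 2 +
      K σ * (D (eX j) U p * ∑ i, p.2 i * D (eX j) (D (eX i) U) p) +
      (K σ * ((1/2) * ((D (eT n) U p) ^ 2 - Nn U p)) - F1 σ * U p ^ 2) * 1 +
      (k' * ((D (eT n) U p) ^ 2 - Nn U p) - 2 * f2 * U p ^ 2) * (p.2 j) ^ 2 +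
      (K σ * D (eT n) U p) * (p.2 j * D (eX j) (D (eT n) U) p) -
      K σ * (p.2 j * ∑ i, D (eX i) U p * D (eX j) (D (eX i) U) p) := by
    intro j
    unfold Qm
    have d1 := (dT.fun_pow 2).fun_sub dN
    have d2 := (d1.const_mul (1/2))
    have c0 : D (eX j) (fun q : ST n => q.2 j) p = 1 := by rw [D_coord]; simp [eX]
    rw [D_add ((dX j).fun_mul ((dK.fun_mul dA).fun_add (dF.fun_mul dU)))
        ((dC j).fun_mul ((dK.fun_mul d2).fun_sub (dF1.fun_mul (dU.fun_pow 2)))),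
      D_mul (dX j) ((dK.fun_mul dA).fun_add (dF.fun_mul dU)), D_add (dK.fun_mul dA) (dF.fun_mul dU), D_mul dK dA,
      D_mul dF dU, D_mul (dC j) ((dK.fun_mul d2).fun_sub (dF1.fun_mul (dU.fun_pow 2))),
      D_sub (dK.fun_mul d2) (dF1.fun_mul (dU.fun_pow 2)), D_mul dK d2, D_mul dF1 (dU.fun_pow 2),
      D_const_mul d1, D_sub (dT.fun_pow 2) dN, D_sq dT, D_sq dU, DKX, DFX, DF1X, DAX, DNX, c0]
    ring
  have hZ : ∑ j, D (eX j) U p * ∑ i, p.2 i * D (eX j) (D (eX i) U) p =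
      ∑ j, p.2 j * ∑ i, D (eX i) U p * D (eX j) (D (eX i) U) p := by
    simp_rw [Finset.mul_sum]
    rw [Finset.sum_comm]
    refine Finset.sum_congr rfl fun i _ => Finset.sum_congr rfl fun j _ => ?_
    rw [D_comm hs]; ring
  have hσs : ∑ j, (p.2 j) ^ 2 = σ := by rw [hσ, EuclideanSpace.real_norm_sq_eq]
  simp_rw [e2]
  rw [e1]
  simp only [Finset.sum_add_distrib, Finset.sum_sub_distrib, ← Finset.mul_sum]
  rw [hZ, hσs, ← hU.wave p]
  change _ - ((_ + _ * Aa U p + _ * Nn U p + _ + _ + _ + _) - _) = _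
  simp only [Finset.sum_const, Finset.card_univ, Fintype.card_fin, nsmul_eq_mul]
  ring

end

end Mor


namespace Mor

open Set Filter Topology

noncomputable section

variable {n : ℕ}

/-- smoothed radius -/
def Sw (ε σ : ℝ) : ℝ := √(ε ^ 2 + σ)
/-- weight -/
def Hw (ε σ : ℝ) : ℝ := (ε + Sw ε σ)⁻¹
/-- weight derivative -/
def Hw1 (ε σ : ℝ) : ℝ := -(Hw ε σ ^ 2 / (2 * Sw ε σ))
/-- zeroth order weight -/
def Gw (n : ℕ) (ε σ : ℝ) : ℝ := (1/2) * ((Sw ε σ)⁻¹ + (n - 2) * Hw ε σ)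
/-- its derivative -/
def Gw1 (n : ℕ) (ε σ : ℝ) : ℝ :=
  -(1/4) * (((Sw ε σ)⁻¹) ^ 3 + (n - 2) * (Hw ε σ ^ 2 * (Sw ε σ)⁻¹))
/-- its second derivative -/
def Gw2 (n : ℕ) (ε σ : ℝ) : ℝ :=
  (3/8) * ((Sw ε σ)⁻¹) ^ 5 + ((n - 2) / 4) * (Hw ε σ ^ 3 * ((Sw ε σ)⁻¹) ^ 2 +
    Hw ε σ ^ 2 * ((Sw ε σ)⁻¹) ^ 3 / 2)

section
variable {ε σ : ℝ}

lemma Sw_pos (hε : 0 < ε) (hσ : 0 ≤ σ) : 0 < Sw ε σ := Real.sqrt_pos.2 (by positivity)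

lemma Sw_sq (hε : 0 < ε) (hσ : 0 ≤ σ) : Sw ε σ ^ 2 = ε ^ 2 + σ := Real.sq_sqrt (by positivity)

lemma Hw_pos (hε : 0 < ε) (hσ : 0 ≤ σ) : 0 < Hw ε σ :=
  inv_pos.2 (add_pos hε (Sw_pos hε hσ))

lemma Hw_mul (hε : 0 < ε) (hσ : 0 ≤ σ) : Hw ε σ * (ε + Sw ε σ) = 1 :=
  inv_mul_cancel₀ (add_pos hε (Sw_pos hε hσ)).ne'

lemma Sw_deriv (hε : 0 < ε) (hσ : 0 ≤ σ) : HasDerivAt (Sw ε) (1 / (2 * Sw ε σ)) σ :=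
  ((hasDerivAt_id σ).const_add (ε ^ 2)).sqrt (by positivity)

lemma Hw_deriv (hε : 0 < ε) (hσ : 0 ≤ σ) : HasDerivAt (Hw ε) (Hw1 ε σ) σ := by
  have hS := Sw_pos hε hσ
  have h := ((Sw_deriv hε hσ).const_add ε).inv (add_pos hε hS).ne'
  refine h.congr_deriv ?_
  unfold Hw1 Hw
  field_simp

lemma Gw_deriv (hε : 0 < ε) (hσ : 0 ≤ σ) : HasDerivAt (Gw n ε) (Gw1 n ε σ) σ := by
  have hS := Sw_pos hε hσ
  have h := (((Sw_deriv hε hσ).inv hS.ne').add ((Hw_deriv hε hσ).const_mul ((n:ℝ) - 2))).const_mul (1/2)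
  refine h.congr_deriv ?_
  unfold Gw1 Hw1
  field_simp
  ring

lemma Gw1_deriv (hε : 0 < ε) (hσ : 0 ≤ σ) : HasDerivAt (Gw1 n ε) (Gw2 n ε σ) σ := by
  have hS := Sw_pos hε hσ
  have hi := (Sw_deriv hε hσ).inv hS.ne'
  have h := ((hi.pow 3).add ((((Hw_deriv hε hσ).pow 2).mul hi).const_mul
    ((n:ℝ) - 2))).const_mul (-(1/4))
  refine h.congr_deriv ?_
  unfold Gw2 Hw1
  simp
  field_simp
  ring

lemma weight_rel (hε : 0 < ε) (hσ : 0 ≤ σ) :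
    n * Hw ε σ + 2 * σ * Hw1 ε σ = 2 * Gw n ε σ := by
  have hS := Sw_pos hε hσ
  have h2 := Sw_sq hε hσ
  have hp := add_pos hε hS
  have : σ = (Sw ε σ - ε) * (ε + Sw ε σ) := by nlinarith
  unfold Gw Hw1 Hw
  field_simp
  nlinarith

lemma Sw_inv_ge (hε : 0 < ε) (hσ : 0 ≤ σ) : Hw ε σ ≤ (Sw ε σ)⁻¹ :=
  inv_anti₀ (Sw_pos hε hσ) (by linarith)

lemma weight_super (hn : 3 ≤ n) (hε : 0 < ε) (hσ : 0 ≤ σ) :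
    n * Gw1 n ε σ + 2 * σ * Gw2 n ε σ ≤ 0 := by
  have hS := Sw_pos hε hσ
  have h2 := Sw_sq hε hσ
  have hH := Hw_pos hε hσ
  have hHm := Hw_mul hε hσ
  have hn' : (3:ℝ) ≤ n := by exact_mod_cast hn
  set S := Sw ε σ with hSd
  set H := Hw ε σ with hHd
  have e : n * Gw1 n ε σ + 2 * σ * Gw2 n ε σ =
      (1/4) * (S⁻¹) ^ 5 * (3 * σ - n * S ^ 2) +
      ((n - 2) / 4) * H ^ 2 * (S⁻¹) ^ 3 * (2 * σ * H * S + σ - n * S ^ 2) := by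
    unfold Gw1 Gw2
    simp only [← hSd, ← hHd]
    field_simp
    ring
  rw [e]
  have hσH : σ * H = S - ε := by
    have : σ = (S - ε) * (ε + S) := by nlinarith
    rw [this]; linear_combination (S - ε) * hHm
  have a1 : 3 * σ - n * S ^ 2 ≤ 0 := by nlinarith
  have a2 : 2 * σ * H * S + σ - n * S ^ 2 ≤ 0 := by
    have : 2 * σ * H * S = 2 * (S - ε) * S := by rw [← hσH]; ring
    rw [this]; nlinarith [mul_pos hε hS]
  have b1 : (1/4) * (S⁻¹) ^ 5 * (3 * σ - n * S ^ 2) ≤ 0 :=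
    mul_nonpos_of_nonneg_of_nonpos (by positivity) a1
  have b2 : ((n - 2) / 4) * H ^ 2 * (S⁻¹) ^ 3 * (2 * σ * H * S + σ - n * S ^ 2) ≤ 0 := by
    refine mul_nonpos_of_nonneg_of_nonpos ?_ a2
    have : (0:ℝ) ≤ (n - 2) / 4 := by linarith
    positivity
  linarith

lemma Gw_bound (hn : 3 ≤ n) (hε : 0 < ε) (hσ : 0 ≤ σ) :
    0 ≤ Gw n ε σ ∧ Gw n ε σ ≤ n * (Sw ε σ)⁻¹ ∧ |Gw1 n ε σ| ≤ n * ((Sw ε σ)⁻¹) ^ 3 := by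
  have hS := inv_pos.2 (Sw_pos hε hσ)
  have hH := Hw_pos hε hσ
  have hHS := Sw_inv_ge hε hσ
  have hn' : (3:ℝ) ≤ n := by exact_mod_cast hn
  have hn2 : (0:ℝ) ≤ n - 2 := by linarith
  set s := (Sw ε σ)⁻¹
  set H := Hw ε σ with hHd
  have hm : (n - 2) * H ≤ (n - 2) * s := mul_le_mul_of_nonneg_left hHS hn2
  have hm0 : 0 ≤ (n - 2) * H := mul_nonneg hn2 hH.le
  have hsq : H ^ 2 * s ≤ s ^ 3 := by
    have : H ^ 2 ≤ s ^ 2 := by gcongr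
    nlinarith
  have hsq' : (n - 2) * (H ^ 2 * s) ≤ (n - 2) * s ^ 3 := mul_le_mul_of_nonneg_left hsq hn2
  have hsq0 : 0 ≤ (n - 2) * (H ^ 2 * s) := by positivity
  have hs3 : 0 < s ^ 3 := by positivity
  refine ⟨?_, ?_, ?_⟩
  · unfold Gw; change 0 ≤ (1/2) * (s + (n-2) * H); linarith
  · unfold Gw; change (1/2) * (s + (n-2) * H) ≤ n * s; nlinarith
  · unfold Gw1
    change |-(1/4) * (s ^ 3 + (n-2) * (H ^ 2 * s))| ≤ n * s ^ 3
    rw [abs_le]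
    constructor <;> nlinarith

end

set_option maxHeartbeats 2000000 in
/-- abstract pointwise inequality with cutoff errors -/
lemma weight_ineq (hn : 3 ≤ n) {ε σ R M z z1 z2 N A ut u B : ℝ} (hε : 0 < ε) (hσ : 0 ≤ σ)
    (hR : 0 < R) (hz : 0 ≤ z) (h1 : |z1| ≤ M) (h2 : |z2| ≤ M)
    (hsupp : (z1 ≠ 0 ∨ z2 ≠ 0) → R ^ 2 ≤ σ ∧ σ ≤ 2 * R ^ 2)
    (hA : A ^ 2 ≤ σ * N) (hN : 0 ≤ N) (hB0 : 0 ≤ B) (hB : σ ≤ 2 * R ^ 2 → u ^ 2 ≤ B) :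
    -((z * Hw ε σ) * N + 2 * (z1 / R ^ 2 * Hw ε σ + z * Hw1 ε σ) * A ^ 2) +
      ((1/2) * (n * (z * Hw ε σ) + 2 * σ * (z1 / R ^ 2 * Hw ε σ + z * Hw1 ε σ)) -
        z * Gw n ε σ) * (N - ut ^ 2) +
      u ^ 2 * (n * (z1 / R ^ 2 * Gw n ε σ + z * Gw1 n ε σ) +
        2 * σ * (z2 / R ^ 4 * Gw n ε σ + 2 * (z1 / R ^ 2) * Gw1 n ε σ + z * Gw2 n ε σ)) ≤
    - (z * (Hw ε σ * N + 2 * Hw1 ε σ * A ^ 2)) + M * (6 + 12 * n ^ 2) / R * (ut ^ 2 + N) +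
      M * (6 + 12 * n ^ 2) / R ^ 3 * B := by
  have hrel := weight_rel (n := n) hε hσ
  have hsup := weight_super hn hε hσ
  have hM : 0 ≤ M := (abs_nonneg _).trans h1
  have hut := sq_nonneg ut
  have hu := sq_nonneg u
  have hC1 : 0 ≤ M * (6 + 12 * (n:ℝ) ^ 2) / R := by positivity
  have hC3 : 0 ≤ M * (6 + 12 * (n:ℝ) ^ 2) / R ^ 3 := by positivity
  have main : u ^ 2 * (z * (n * Gw1 n ε σ + 2 * σ * Gw2 n ε σ)) ≤ 0 :=
    mul_nonpos_of_nonneg_of_nonpos hu (mul_nonpos_of_nonneg_of_nonpos hz hsup)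
  have eq : -((z * Hw ε σ) * N + 2 * (z1 / R ^ 2 * Hw ε σ + z * Hw1 ε σ) * A ^ 2) +
      ((1/2) * (n * (z * Hw ε σ) + 2 * σ * (z1 / R ^ 2 * Hw ε σ + z * Hw1 ε σ)) -
        z * Gw n ε σ) * (N - ut ^ 2) +
      u ^ 2 * (n * (z1 / R ^ 2 * Gw n ε σ + z * Gw1 n ε σ) +
        2 * σ * (z2 / R ^ 4 * Gw n ε σ + 2 * (z1 / R ^ 2) * Gw1 n ε σ + z * Gw2 n ε σ)) =
      - (z * (Hw ε σ * N + 2 * Hw1 ε σ * A ^ 2)) +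
      u ^ 2 * (z * (n * Gw1 n ε σ + 2 * σ * Gw2 n ε σ)) +
      (-(z1 * (2 * Hw ε σ / R ^ 2 * A ^ 2)) + z1 * (σ * Hw ε σ / R ^ 2 * (N - ut ^ 2))) +
      u ^ 2 * (z1 * (n * Gw n ε σ / R ^ 2) + z2 * (2 * σ * Gw n ε σ / R ^ 4) +
        z1 * (4 * σ * Gw1 n ε σ / R ^ 2)) := by
    have : Gw n ε σ = (1/2) * (n * Hw ε σ + 2 * σ * Hw1 ε σ) := by rw [hrel]; ring
    linear_combination (z * (N - ut ^ 2)) * (-this)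
  rw [eq]
  by_cases hc : z1 ≠ 0 ∨ z2 ≠ 0
  swap
  · push Not at hc
    rw [hc.1, hc.2]
    have := mul_nonneg hC1 (add_nonneg hut hN)
    have := mul_nonneg hC3 hB0
    linarith
  obtain ⟨hl, hu2⟩ := hsupp hc
  have hBu := hB hu2
  have hS := Sw_pos hε hσ
  have hSR : R ≤ Sw ε σ := Real.le_sqrt_of_sq_le (by nlinarith)
  have hSi : (Sw ε σ)⁻¹ ≤ R⁻¹ := inv_anti₀ hR hSR
  have hSi0 : 0 < (Sw ε σ)⁻¹ := inv_pos.2 hS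
  have hH := Hw_pos hε hσ
  have hHR : Hw ε σ ≤ R⁻¹ := (Sw_inv_ge hε hσ).trans hSi
  obtain ⟨g0, g1, g2⟩ := Gw_bound hn hε hσ
  have g1' : Gw n ε σ ≤ n * R⁻¹ := g1.trans (by gcongr)
  have g2' : |Gw1 n ε σ| ≤ n * (R⁻¹) ^ 3 := g2.trans (by gcongr)
  have hn' : (3:ℝ) ≤ n := by exact_mod_cast hn
  have ab : ∀ {a b c : ℝ}, |a| ≤ M → |b| ≤ c → a * b ≤ M * c := fun {a b c} ha hb =>
    (le_abs_self _).trans (by rw [abs_mul]; gcongr)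
  have t1 : -(z1 * (2 * Hw ε σ / R ^ 2 * A ^ 2)) ≤ M * (4 * R⁻¹ * N) := by
    rw [← neg_mul]
    refine ab (by rwa [abs_neg]) ?_
    rw [abs_of_nonneg (by positivity)]
    calc 2 * Hw ε σ / R ^ 2 * A ^ 2 ≤ 2 * R⁻¹ / R ^ 2 * (2 * R ^ 2 * N) := by
          gcongr
          exact hA.trans (by gcongr)
      _ = 4 * R⁻¹ * N := by field_simp; ring
  have t2 : z1 * (σ * Hw ε σ / R ^ 2 * (N - ut ^ 2)) ≤ M * (2 * R⁻¹ * (ut ^ 2 + N)) := by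
    refine ab h1 ?_
    rw [abs_mul, abs_of_nonneg (by positivity)]
    calc σ * Hw ε σ / R ^ 2 * |N - ut ^ 2| ≤ (2 * R ^ 2) * R⁻¹ / R ^ 2 * (ut ^ 2 + N) := by
          gcongr
          rw [abs_le]; constructor <;> linarith
      _ = 2 * R⁻¹ * (ut ^ 2 + N) := by field_simp
  have t3 : z1 * (n * Gw n ε σ / R ^ 2) ≤ M * (n ^ 2 * (R⁻¹) ^ 3) := by
    refine ab h1 ?_
    rw [abs_of_nonneg (by positivity)]
    calc n * Gw n ε σ / R ^ 2 ≤ n * (n * R⁻¹) / R ^ 2 := by gcongr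
      _ = _ := by field_simp
  have t4 : z2 * (2 * σ * Gw n ε σ / R ^ 4) ≤ M * (4 * n * (R⁻¹) ^ 3) := by
    refine ab h2 ?_
    rw [abs_of_nonneg (by positivity)]
    calc 2 * σ * Gw n ε σ / R ^ 4 ≤ 2 * (2 * R ^ 2) * (n * R⁻¹) / R ^ 4 := by gcongr
      _ = _ := by field_simp; ring
  have t5 : z1 * (4 * σ * Gw1 n ε σ / R ^ 2) ≤ M * (8 * n * (R⁻¹) ^ 3) := by
    refine ab h1 ?_
    rw [abs_div, abs_mul, abs_of_nonneg (by positivity : 0 ≤ 4 * σ),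
      abs_of_nonneg (by positivity : 0 ≤ R ^ 2)]
    calc 4 * σ * |Gw1 n ε σ| / R ^ 2 ≤ 4 * (2 * R ^ 2) * (n * (R⁻¹) ^ 3) / R ^ 2 := by gcongr
      _ = _ := by field_simp; ring
  have t6 : u ^ 2 * (z1 * (n * Gw n ε σ / R ^ 2) + z2 * (2 * σ * Gw n ε σ / R ^ 4) +
        z1 * (4 * σ * Gw1 n ε σ / R ^ 2)) ≤ M * (6 + 12 * n ^ 2) / R ^ 3 * B := by
    calc _ ≤ u ^ 2 * (M * (n ^ 2 * (R⁻¹) ^ 3) + M * (4 * n * (R⁻¹) ^ 3) +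
          M * (8 * n * (R⁻¹) ^ 3)) := by gcongr
      _ ≤ B * (M * (n ^ 2 * (R⁻¹) ^ 3) + M * (4 * n * (R⁻¹) ^ 3) +
          M * (8 * n * (R⁻¹) ^ 3)) := by gcongr
      _ = M * (n ^ 2 + 4 * n + 8 * n) / R ^ 3 * B := by field_simp
      _ ≤ M * (6 + 12 * n ^ 2) / R ^ 3 * B := by
          have hq : (n:ℝ) ^ 2 + 4 * n + 8 * n ≤ 6 + 12 * n ^ 2 := by nlinarith
          gcongr
  have t7 : M * (4 * R⁻¹ * N) + M * (2 * R⁻¹ * (ut ^ 2 + N)) ≤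
      M * (6 + 12 * n ^ 2) / R * (ut ^ 2 + N) := by
    have : 0 ≤ M * R⁻¹ * (4 * ut ^ 2 + 12 * n ^ 2 * (ut ^ 2 + N)) := by positivity
    have e : M * (6 + 12 * (n:ℝ) ^ 2) / R * (ut ^ 2 + N) =
      M * (4 * R⁻¹ * N) + M * (2 * R⁻¹ * (ut ^ 2 + N)) +
        M * R⁻¹ * (4 * ut ^ 2 + 12 * n ^ 2 * (ut ^ 2 + N)) := by rw [div_eq_mul_inv]; ring
    linarith
  linarith

/-- lower bound of the main term; `a` is the squared radial derivative -/
lemma weight_lower {ε r N A a : ℝ} (hε : 0 < ε) (hr : 0 ≤ r) (hA : A ^ 2 = r ^ 2 * a)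
    (ha : 0 ≤ a) (haN : a ≤ N) :
    (1/2) * (ε / (ε + r) ^ 2 * a + (ε + r)⁻¹ * (N - a)) ≤
      Hw ε (r ^ 2) * N + 2 * Hw1 ε (r ^ 2) * A ^ 2 := by
  have hσ : 0 ≤ r ^ 2 := sq_nonneg r
  have hS := Sw_pos hε hσ
  have h2 := Sw_sq hε hσ
  have hH := Hw_pos hε hσ
  have hSr : Sw ε (r ^ 2) ≤ ε + r := by
    refine Real.sqrt_le_iff.2 ⟨by positivity, ?_⟩
    nlinarith [mul_nonneg hε.le hr]
  set S := Sw ε (r ^ 2) with hSd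
  have hp : 0 < ε + S := by positivity
  have e : Hw ε (r ^ 2) * N + 2 * Hw1 ε (r ^ 2) * A ^ 2 =
      (ε + S)⁻¹ * (N - a) + ε / (S * (ε + S)) * a := by
    rw [hA]
    have hr2 : r ^ 2 = (S - ε) * (ε + S) := by nlinarith
    unfold Hw1
    have : Hw ε (r ^ 2) = (ε + S)⁻¹ := rfl
    rw [this, ← hSd]
    rw [hr2]
    field_simp
    ring
  rw [e]
  have hpr : 0 < ε + r := by positivity
  have b1 : (1/2) * (ε + r)⁻¹ ≤ (ε + S)⁻¹ := by
    rw [show (1/2) * (ε + r)⁻¹ = (2 * (ε + r))⁻¹ by rw [mul_inv]; ring]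
    exact inv_anti₀ hp (by linarith)
  have b2 : (1/2) * (ε / (ε + r) ^ 2) ≤ ε / (S * (ε + S)) := by
    rw [show (1/2) * (ε / (ε + r) ^ 2) = ε / ((ε + r) * (2 * (ε + r))) by field_simp]
    refine div_le_div_of_nonneg_left hε.le (by positivity) ?_
    refine mul_le_mul hSr (by linarith) hp.le hpr.le
  have hNa : 0 ≤ N - a := by linarith
  nlinarith [mul_le_mul_of_nonneg_right b1 hNa, mul_le_mul_of_nonneg_right b2 ha]

end

end Mor


namespace Mor

open Set Filter Topology

noncomputable section

variable {n : ℕ}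

lemma segment_sq {E : Type*} [NormedAddCommGroup E] [NormedSpace ℝ E] {F : E → ℝ}
    (hF : ContDiff ℝ 1 F) (p v : E) :
    ENNReal.ofReal ((F (p + v) - F p) ^ 2) ≤
      ∫⁻ θ in Icc (0:ℝ) 1, ENNReal.ofReal ((fderiv ℝ F (p + θ • v) v) ^ 2) := by
  have hc : Continuous (fun θ : ℝ => fderiv ℝ F (p + θ • v) v) :=
    ((hF.continuous_fderiv one_ne_zero).comp (by fun_prop)).clm_apply continuous_const
  have hd : ∀ θ : ℝ, HasDerivAt (fun θ : ℝ => F (p + θ • v)) (fderiv ℝ F (p + θ • v) v) θ := by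
    intro θ
    have h1 : HasDerivAt (fun θ : ℝ => p + θ • v) v θ := by
      simpa using ((hasDerivAt_id θ).smul_const v).const_add p
    exact ((hF.differentiable one_ne_zero _).hasFDerivAt).comp_hasDerivAt θ h1
  set h := fun θ : ℝ => fderiv ℝ F (p + θ • v) v with hh
  have hint : ∫ θ in (0:ℝ)..1, h θ = F (p + v) - F p := by
    rw [intervalIntegral.integral_eq_sub_of_hasDerivAt (fun θ _ => hd θ) (hc.intervalIntegrable _ _)]
    simp
  set m := F (p + v) - F p
  have key : m ^ 2 ≤ ∫ θ in (0:ℝ)..1, h θ ^ 2 := by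
    have h0 : 0 ≤ ∫ θ in (0:ℝ)..1, (h θ - m) ^ 2 :=
      intervalIntegral.integral_nonneg zero_le_one fun _ _ => sq_nonneg _
    have e : ∫ θ in (0:ℝ)..1, (h θ - m) ^ 2 = (∫ θ in (0:ℝ)..1, h θ ^ 2) - m ^ 2 := by
      have : ∀ θ, (h θ - m) ^ 2 = h θ ^ 2 - (2 * m * h θ - m ^ 2) := fun θ => by ring
      simp_rw [this]
      rw [intervalIntegral.integral_sub
        (Continuous.intervalIntegrable (by fun_prop) _ _)
        (Continuous.intervalIntegrable (by fun_prop) _ _),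
        intervalIntegral.integral_sub (Continuous.intervalIntegrable (by fun_prop) _ _)
        (by simp), intervalIntegral.integral_const_mul, hint]
      simp; ring
    linarith
  have hI : IntegrableOn (fun θ => h θ ^ 2) (Icc 0 1) := (hc.pow 2).continuousOn.integrableOn_Icc
  rw [← ofReal_integral_eq_lintegral_ofReal hI (ae_of_all _ fun _ => sq_nonneg _),
    integral_Icc_eq_integral_Ioc, ← intervalIntegral.integral_of_le zero_le_one]
  exact ENNReal.ofReal_le_ofReal key

lemma fderiv_sq_le (f : Eucl n → ℝ) (x v : Eucl n) :
    (fderiv ℝ f x v) ^ 2 ≤ ‖v‖ ^ 2 * ∑ i, (fderiv ℝ f x (EuclideanSpace.single i 1)) ^ 2 := by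
  have : fderiv ℝ f x v = ∑ i, v i * fderiv ℝ f x (EuclideanSpace.single i 1) := by
    conv_lhs => rw [← (EuclideanSpace.basisFun (Fin n) ℝ).sum_repr v]
    simp
  rw [this]
  exact dot_sq_le v _

lemma lintegral_affine {g : Eucl n → ℝ≥0∞} (hg : Measurable g) {θ : ℝ} (hθ : 1/2 ≤ θ)
    (b : Eucl n) : ∫⁻ x, g (θ • x + b) ≤ 2 ^ n * ∫⁻ x, g x := by
  have h0 : θ ≠ 0 := by linarith
  have e : ∫⁻ x, g (θ • x + b) = ∫⁻ y, g (y + b) ∂(Measure.map (θ • ·) (volume : Measure (Eucl n))) := by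
    rw [lintegral_map (f := fun y => g (y + b)) (hg.comp (measurable_id.add_const b)) (measurable_const_smul θ)]
  rw [e, Measure.map_addHaar_smul _ h0, lintegral_smul_measure, lintegral_add_right_eq_self]
  rw [smul_eq_mul]
  gcongr
  rw [finrank_euclideanSpace_fin]
  have hp : 0 < θ := by linarith
  rw [abs_of_nonneg (by positivity)]
  have : (θ ^ n)⁻¹ ≤ 2 ^ n := by
    rw [← inv_pow]
    have : θ⁻¹ ≤ 2 := by
      rw [inv_le_comm₀ hp two_pos]; linarith
    gcongr
  calc ENNReal.ofReal (θ ^ n)⁻¹ ≤ ENNReal.ofReal (2 ^ n) := ENNReal.ofReal_le_ofReal this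
    _ = 2 ^ n := by rw [ENNReal.ofReal_pow two_pos.le]; simp

lemma poincare {f : Eucl n → ℝ} (hf : ContDiff ℝ 1 f) {ρ : ℝ} (hρ : 0 < ρ) :
    ∃ c : ℝ, ∫⁻ x in Metric.closedBall (0 : Eucl n) ρ, ENNReal.ofReal ((f x - c) ^ 2) ≤
      ENNReal.ofReal (4 * ρ ^ 2) * 2 ^ n *
        ∫⁻ x, ENNReal.ofReal (∑ i, (fderiv ℝ f x (EuclideanSpace.single i 1)) ^ 2) := by
  set B := Metric.closedBall (0 : Eucl n) ρ with hB
  set g : Eucl n → ℝ := fun x => ∑ i, (fderiv ℝ f x (EuclideanSpace.single i 1)) ^ 2 with hg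
  have hgc : Continuous g := by
    refine continuous_finsetSum _ fun i _ => ?_
    exact ((hf.continuous_fderiv one_ne_zero).clm_apply continuous_const).pow 2
  set G : Eucl n → ℝ≥0∞ := fun x => ENNReal.ofReal (g x) with hG
  have hGm : Measurable G := hgc.measurable.ennreal_ofReal
  have hfc := hf.continuous
  have hBm : MeasurableSet B := Metric.isClosed_closedBall.measurableSet
  have hB0 : volume B ≠ 0 := (Metric.measure_closedBall_pos volume _ hρ).ne'
  have hBt : volume B ≠ ∞ := (isCompact_closedBall (0 : Eucl n) ρ).measure_lt_top.ne
  have step : ∀ θ ∈ Icc (0:ℝ) 1, ∫⁻ y in B, ∫⁻ x in B, G (y + θ • (x - y)) ≤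
      volume B * (2 ^ n * ∫⁻ x, G x) := by
    intro θ hθ
    have hconst : ∀ c : ℝ≥0∞, ∫⁻ _ in B, c = volume B * c := fun c => by
      rw [setLIntegral_const, mul_comm]
    by_cases h : 1/2 ≤ θ
    · rw [← hconst]
      refine lintegral_mono fun y => ?_
      calc ∫⁻ x in B, G (y + θ • (x - y)) ≤ ∫⁻ x, G (y + θ • (x - y)) :=
            setLIntegral_le_lintegral _ _
        _ = ∫⁻ x, G (θ • x + (y - θ • y)) := by
            congr 1; ext x; congr 1; module
        _ ≤ _ := lintegral_affine hGm h _
    · rw [lintegral_lintegral_swap]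
      · rw [← hconst]
        refine lintegral_mono fun x => ?_
        calc ∫⁻ y in B, G (y + θ • (x - y)) ≤ ∫⁻ y, G (y + θ • (x - y)) :=
              setLIntegral_le_lintegral _ _
          _ = ∫⁻ y, G ((1 - θ) • y + θ • x) := by
              congr 1; ext y; congr 1; module
          _ ≤ _ := lintegral_affine hGm (by linarith) _
      · exact (hGm.comp (by fun_prop)).aemeasurable
  have hdbl : ∫⁻ y in B, ∫⁻ x in B, ENNReal.ofReal ((f x - f y) ^ 2) ≤
      volume B * (ENNReal.ofReal (4 * ρ ^ 2) * 2 ^ n * ∫⁻ x, G x) := by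
    calc ∫⁻ y in B, ∫⁻ x in B, ENNReal.ofReal ((f x - f y) ^ 2)
        ≤ ∫⁻ y in B, ∫⁻ x in B, ∫⁻ θ in Icc (0:ℝ) 1,
            ENNReal.ofReal (4 * ρ ^ 2) * G (y + θ • (x - y)) := by
          refine setLIntegral_mono' hBm fun y hy => setLIntegral_mono' hBm fun x hx => ?_
          have := segment_sq hf y (x - y)
          rw [add_sub_cancel] at this
          refine this.trans (lintegral_mono fun θ => ?_)
          rw [← ENNReal.ofReal_mul (by positivity)]
          refine ENNReal.ofReal_le_ofReal ((fderiv_sq_le f _ _).trans ?_)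
          have h0 : 0 ≤ g (y + θ • (x - y)) := Finset.sum_nonneg fun _ _ => sq_nonneg _
          refine mul_le_mul_of_nonneg_right ?_ h0
          have h1 : ‖x - y‖ ≤ 2 * ρ := by
            have := norm_sub_le x y
            rw [hB, mem_closedBall_zero_iff] at hx hy
            linarith
          calc ‖x - y‖ ^ 2 ≤ (2 * ρ) ^ 2 := by gcongr
            _ = 4 * ρ ^ 2 := by ring
      _ = ∫⁻ y in B, ∫⁻ θ in Icc (0:ℝ) 1, ∫⁻ x in B,
            ENNReal.ofReal (4 * ρ ^ 2) * G (y + θ • (x - y)) := by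
          refine lintegral_congr fun y => ?_
          rw [lintegral_lintegral_swap]
          exact (Measurable.const_mul (hGm.comp (by fun_prop)) _).aemeasurable
      _ = ∫⁻ θ in Icc (0:ℝ) 1, ∫⁻ y in B, ∫⁻ x in B,
            ENNReal.ofReal (4 * ρ ^ 2) * G (y + θ • (x - y)) := by
          rw [lintegral_lintegral_swap]
          have hm : Measurable (fun q : (Eucl n × ℝ) × Eucl n =>
            ENNReal.ofReal (4 * ρ ^ 2) * G (q.1.1 + q.1.2 • (q.2 - q.1.1))) :=
            Measurable.const_mul (hGm.comp (by fun_prop)) _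
          exact (hm.lintegral_prod_right' (ν := volume.restrict B)).aemeasurable
      _ ≤ ∫⁻ θ in Icc (0:ℝ) 1, ENNReal.ofReal (4 * ρ ^ 2) * (volume B * (2 ^ n * ∫⁻ x, G x)) := by
          refine setLIntegral_mono' measurableSet_Icc fun θ hθ => ?_
          have e : ∫⁻ y in B, ∫⁻ x in B, ENNReal.ofReal (4 * ρ ^ 2) * G (y + θ • (x - y)) =
              ENNReal.ofReal (4 * ρ ^ 2) * ∫⁻ y in B, ∫⁻ x in B, G (y + θ • (x - y)) := by
            rw [← lintegral_const_mul' _ _ ENNReal.ofReal_ne_top]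
            refine lintegral_congr fun y => ?_
            rw [lintegral_const_mul' _ _ ENNReal.ofReal_ne_top]
          rw [e]
          gcongr
          exact step θ hθ
      _ = _ := by
          rw [setLIntegral_const]; simp; ring
  obtain ⟨y, hy, hle⟩ := exists_le_setLAverage (μ := volume) (s := B)
    (f := fun y => ∫⁻ x in B, ENNReal.ofReal ((f x - f y) ^ 2)) hB0 hBt (by
      have hm : Measurable (fun q : Eucl n × Eucl n => ENNReal.ofReal ((f q.2 - f q.1) ^ 2)) := by
        exact Measurable.ennreal_ofReal (by fun_prop)
      exact (hm.lintegral_prod_right' (ν := volume.restrict B)).aemeasurable)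
  refine ⟨f y, hle.trans ?_⟩
  rw [setLAverage_eq]
  refine ENNReal.div_le_of_le_mul' hdbl

lemma time_diff {U : ST n → ℝ} (hU : IsSol U) (h0 : Integrable (fun x => en U (0, x))) {T : ℝ}
    (hT : 0 ≤ T) : ∫⁻ x, ENNReal.ofReal ((U (T, x) - U (0, x)) ^ 2) ≤
      ENNReal.ofReal (T ^ 2 * ∫ x, en U (0, x)) := by
  have hs : ContDiff ℝ 1 U := hU.smooth.of_le (by exact_mod_cast le_top)
  have hce := (contDiff_en hU.smooth).continuous
  calc ∫⁻ x, ENNReal.ofReal ((U (T, x) - U (0, x)) ^ 2)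
      ≤ ∫⁻ x, ∫⁻ θ in Icc (0:ℝ) 1, ENNReal.ofReal (T ^ 2) * ENNReal.ofReal (en U (θ * T, x)) := by
        refine lintegral_mono fun x => ?_
        have := segment_sq hs (0, x) (T, 0)
        simp only [Prod.mk_add_mk, zero_add, add_zero, Prod.smul_mk, smul_zero, smul_eq_mul] at this
        refine this.trans (lintegral_mono fun θ => ?_)
        rw [← ENNReal.ofReal_mul (by positivity)]
        refine ENNReal.ofReal_le_ofReal ?_
        have e : fderiv ℝ U (θ * T, x) (T, 0) = T * D (eT n) U (θ * T, x) := by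
          unfold D eT
          rw [show ((T, 0) : ST n) = T • (1, 0) by simp, map_smul, smul_eq_mul]
        rw [e, mul_pow]
        refine mul_le_mul_of_nonneg_left ?_ (sq_nonneg _)
        unfold en
        linarith [Nn_nonneg U (θ * T, x)]
    _ = ∫⁻ θ in Icc (0:ℝ) 1, ∫⁻ x, ENNReal.ofReal (T ^ 2) * ENNReal.ofReal (en U (θ * T, x)) := by
        rw [lintegral_lintegral_swap]
        exact (Measurable.const_mul (Continuous.measurable (by fun_prop)).ennreal_ofReal _).aemeasurable
    _ ≤ ∫⁻ θ in Icc (0:ℝ) 1, ENNReal.ofReal (T ^ 2 * ∫ x, en U (0, x)) := by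
        refine setLIntegral_mono' measurableSet_Icc fun θ hθ => ?_
        obtain ⟨hi, hle⟩ := energy hU h0 (mul_nonneg hθ.1 hT)
        rw [lintegral_const_mul' _ _ ENNReal.ofReal_ne_top,
          ← ofReal_integral_eq_lintegral_ofReal hi (ae_of_all _ fun _ => en_nonneg _ _),
          ← ENNReal.ofReal_mul (by positivity)]
        exact ENNReal.ofReal_le_ofReal (mul_le_mul_of_nonneg_left hle (sq_nonneg _))
    _ = _ := by rw [setLIntegral_const]; simp

end

end Mor


namespace Mor

open Set Filter Topology

noncomputable section

variable {n : ℕ}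

lemma contDiff_dpsi : ContDiff ℝ (⊤ : ℕ∞) (deriv psi) :=
  (contDiff_infty_iff_deriv.1 contDiff_psi).2

lemma contDiff_ddpsi : ContDiff ℝ (⊤ : ℕ∞) (deriv (deriv psi)) :=
  (contDiff_infty_iff_deriv.1 contDiff_dpsi).2

lemma dpsi_hasDerivAt (a : ℝ) : HasDerivAt (deriv psi) (deriv (deriv psi) a) a :=
  (contDiff_dpsi.differentiable (by simp) a).hasDerivAt

lemma dpsi_lt {a : ℝ} (h : a < 1) : deriv psi a = 0 ∧ deriv (deriv psi) a = 0 := by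
  have h1 : psi =ᶠ[𝓝 a] fun _ => 1 := by
    filter_upwards [Iio_mem_nhds h] with b hb using psi_one (le_of_lt hb)
  have h2 : deriv psi =ᶠ[𝓝 a] fun _ => 0 := by
    have := h1.deriv
    simpa using this
  refine ⟨h2.eq_of_nhds, ?_⟩
  rw [h2.deriv_eq]; simp

lemma dpsi_gt {a : ℝ} (h : 2 < a) : deriv psi a = 0 ∧ deriv (deriv psi) a = 0 := by
  have h1 : psi =ᶠ[𝓝 a] fun _ => 0 := by
    filter_upwards [Ioi_mem_nhds h] with b hb using psi_zero (le_of_lt hb)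
  have h2 : deriv psi =ᶠ[𝓝 a] fun _ => 0 := by
    have := h1.deriv
    simpa using this
  refine ⟨h2.eq_of_nhds, ?_⟩
  rw [h2.deriv_eq]; simp

lemma dpsi_supp {a : ℝ} (h : deriv psi a ≠ 0 ∨ deriv (deriv psi) a ≠ 0) : 1 ≤ a ∧ a ≤ 2 := by
  constructor
  · by_contra hc
    have := dpsi_lt (not_le.1 hc)
    tauto
  · by_contra hc
    have := dpsi_gt (not_le.1 hc)
    tauto

lemma exists_psi_bound : ∃ M : ℝ, 0 ≤ M ∧ ∀ a, |deriv psi a| ≤ M ∧ |deriv (deriv psi) a| ≤ M := by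
  have s1 : HasCompactSupport (deriv psi) := HasCompactSupport.intro (isCompact_Icc (a := (1:ℝ)) (b := 2))
    fun x hx => by
      by_contra hc; exact hx (dpsi_supp (Or.inl hc))
  have s2 : HasCompactSupport (deriv (deriv psi)) :=
    HasCompactSupport.intro (isCompact_Icc (a := (1:ℝ)) (b := 2))
    fun x hx => by
      by_contra hc; exact hx (dpsi_supp (Or.inr hc))
  obtain ⟨M1, h1⟩ := contDiff_dpsi.continuous.bounded_above_of_compact_support s1
  obtain ⟨M2, h2⟩ := contDiff_ddpsi.continuous.bounded_above_of_compact_support s2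
  refine ⟨max M1 M2, (norm_nonneg _).trans ((h1 0).trans (le_max_left _ _)), fun a => ?_⟩
  exact ⟨(h1 a).trans (le_max_left _ _), (h2 a).trans (le_max_right _ _)⟩

/-- a bound for the cutoff derivatives -/
def Mpsi : ℝ := exists_psi_bound.choose

lemma Mpsi_nonneg : 0 ≤ Mpsi := exists_psi_bound.choose_spec.1
lemma dpsi_le (a : ℝ) : |deriv psi a| ≤ Mpsi := (exists_psi_bound.choose_spec.2 a).1
lemma ddpsi_le (a : ℝ) : |deriv (deriv psi) a| ≤ Mpsi := (exists_psi_bound.choose_spec.2 a).2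

/-- squared gradient on slices -/
def gr (f : Eucl n → ℝ) (x : Eucl n) : ℝ :=
  ∑ i, (fderiv ℝ f x (EuclideanSpace.single i 1)) ^ 2

lemma gr_nonneg (f : Eucl n → ℝ) (x : Eucl n) : 0 ≤ gr f x :=
  Finset.sum_nonneg fun _ _ => sq_nonneg _

lemma continuous_gr {f : Eucl n → ℝ} (hf : ContDiff ℝ 1 f) : Continuous (gr f) := by
  refine continuous_finsetSum _ fun i _ => ?_
  exact ((hf.continuous_fderiv one_ne_zero).clm_apply continuous_const).pow 2

lemma hasFDerivAt_rad {K : ℝ → ℝ} {K' : ℝ} {x : Eucl n} (hK : HasDerivAt K K' (‖x‖ ^ 2)) :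
    HasFDerivAt (fun y : Eucl n => K (‖y‖ ^ 2)) (K' • (2 • innerSL ℝ x)) x := by
  have h1 : HasFDerivAt (fun q : Eucl n => ‖q‖ ^ 2) (2 • (innerSL ℝ x)) x := by
    simpa using (hasFDerivAt_id (𝕜 := ℝ) x).norm_sq
  exact hK.comp_hasFDerivAt x h1

lemma hardy (hn : 3 ≤ n) {w : Eucl n → ℝ} (hw : ContDiff ℝ 1 w) (hs : HasCompactSupport w)
    {ε : ℝ} (hε : 0 < ε) :
    ∫ x, w x ^ 2 * (ε ^ 2 + ‖x‖ ^ 2)⁻¹ ≤ 4 * ∫ x, gr w x := by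
  have hpos : ∀ x : Eucl n, 0 < ε ^ 2 + ‖x‖ ^ 2 := fun x => by positivity
  set q : Eucl n → ℝ := fun x => (ε ^ 2 + ‖x‖ ^ 2)⁻¹ with hq
  have hqc : ContDiff ℝ 1 q :=
    (contDiff_const.add (contDiff_id.norm_sq ℝ)).inv fun x => (hpos x).ne'
  have hqd : ∀ x, HasFDerivAt q ((-(q x) ^ 2) • (2 • innerSL ℝ x)) x := by
    intro x
    have h1 : HasDerivAt (fun σ : ℝ => (ε ^ 2 + σ)⁻¹) (-(q x) ^ 2) (‖x‖ ^ 2) := by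
      refine (((hasDerivAt_id (‖x‖ ^ 2)).const_add (ε ^ 2)).inv (hpos x).ne').congr_deriv ?_
      simp [hq, div_eq_mul_inv]
    exact hasFDerivAt_rad h1
  have hcd : ∀ i : Fin n, ContDiff ℝ 1 (fun x : Eucl n => x i) := fun i =>
    (EuclideanSpace.proj i : Eucl n →L[ℝ] ℝ).contDiff
  set Q : Fin n → Eucl n → ℝ := fun i x => w x ^ 2 * (x i * q x) with hQ
  have hQc : ∀ i, ContDiff ℝ 1 (Q i) := fun i => (hw.pow 2).mul ((hcd i).mul hqc)
  have hQs : ∀ i, HasCompactSupport (Q i) := fun i => by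
    have : HasCompactSupport (fun x => w x ^ 2) := hs.comp_left (g := fun a : ℝ => a ^ 2) (by simp)
    exact this.mul_right
  have hQd : ∀ i x, fderiv ℝ (Q i) x (EuclideanSpace.single i 1) =
      2 * w x * fderiv ℝ w x (EuclideanSpace.single i 1) * (x i * q x) +
        w x ^ 2 * (q x - 2 * q x ^ 2 * x i ^ 2) := by
    intro i x
    have h1 := (hw.differentiable one_ne_zero x).hasFDerivAt
    have h2 := ((EuclideanSpace.proj i : Eucl n →L[ℝ] ℝ).hasFDerivAt (x := x)).mul (hqd x)
    have h3 := (h1.pow 2).mul h2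
    have h4 : HasFDerivAt (Q i) _ x := h3
    rw [h4.fderiv]
    simp [inner_single_r]
    ring
  have hdivc : Continuous (fun x => ∑ i, fderiv ℝ (Q i) x (EuclideanSpace.single i 1)) := by
    refine continuous_finsetSum _ fun i _ => ?_
    exact ((hQc i).continuous_fderiv one_ne_zero).clm_apply continuous_const
  have hi : ∀ i, Integrable (fun x => fderiv ℝ (Q i) x (EuclideanSpace.single i (1:ℝ))) := fun i => by
    refine (((hQc i).continuous_fderiv one_ne_zero).clm_apply continuous_const).integrable_of_hasCompactSupport ?_
    exact ((hQs i).fderiv (𝕜 := ℝ)).comp_left (g := fun L : Eucl n →L[ℝ] ℝ => L (EuclideanSpace.single i 1)) (by simp)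
  have hzero : ∫ x, ∑ i, fderiv ℝ (Q i) x (EuclideanSpace.single i 1) = 0 := by
    rw [integral_finsetSum _ fun i _ => hi i]
    exact Finset.sum_eq_zero fun i _ => integral_fderiv_zero (hQc i) (hQs i) _
  have hsq : HasCompactSupport (fun x => w x ^ 2 * q x) := by
    have : HasCompactSupport (fun x => w x ^ 2) := hs.comp_left (g := fun a : ℝ => a ^ 2) (by simp)
    exact this.mul_right
  have i1 : Integrable (fun x => w x ^ 2 * q x) :=
    ((hw.continuous.pow 2).mul hqc.continuous).integrable_of_hasCompactSupport hsq
  have i2 : Integrable (gr w) := by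
    refine (continuous_gr hw).integrable_of_hasCompactSupport ?_
    exact (hs.fderiv (𝕜 := ℝ)).comp_left (g := fun L : Eucl n →L[ℝ] ℝ =>
      ∑ i, (L (EuclideanSpace.single i 1)) ^ 2) (by simp)
  have key : ∀ x, (1/2) * (w x ^ 2 * q x) - 2 * gr w x ≤
      ∑ i, fderiv ℝ (Q i) x (EuclideanSpace.single i 1) := by
    intro x
    simp_rw [hQd]
    set a : ℝ := ∑ i, x i * fderiv ℝ w x (EuclideanSpace.single i 1) with ha
    have haa : a ^ 2 ≤ ‖x‖ ^ 2 * gr w x := dot_sq_le x _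
    have e : ∑ i : Fin n, (2 * w x * fderiv ℝ w x (EuclideanSpace.single i 1) * (x i * q x) +
        w x ^ 2 * (q x - 2 * q x ^ 2 * x i ^ 2)) =
        2 * w x * q x * a + w x ^ 2 * (n * q x - 2 * q x ^ 2 * ‖x‖ ^ 2) := by
      rw [EuclideanSpace.real_norm_sq_eq, ha, Finset.sum_add_distrib, ← Finset.mul_sum,
        Finset.sum_sub_distrib, ← Finset.mul_sum, Finset.mul_sum]
      simp
      rw [Finset.mul_sum]
      refine Finset.sum_congr rfl fun i _ => by ring
    rw [e]
    have hq0 : 0 < q x := inv_pos.2 (hpos x)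
    have hq1 : q x * ‖x‖ ^ 2 ≤ 1 := by
      have : q x * (ε ^ 2 + ‖x‖ ^ 2) = 1 := inv_mul_cancel₀ (hpos x).ne'
      nlinarith [mul_pos hq0 (pow_pos hε 2)]
    have hn' : (3:ℝ) ≤ n := by exact_mod_cast hn
    have b1 : w x ^ 2 * q x ≤ w x ^ 2 * (n * q x - 2 * q x ^ 2 * ‖x‖ ^ 2) := by
      refine mul_le_mul_of_nonneg_left ?_ (sq_nonneg _)
      nlinarith
    have b2 : q x * a ^ 2 ≤ gr w x := by
      have := gr_nonneg w x
      nlinarith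
    have b3 : 0 ≤ q x * ((1/2) * w x ^ 2 + 2 * w x * a + 2 * a ^ 2) := by
      refine mul_nonneg hq0.le ?_
      nlinarith [sq_nonneg (w x + 2 * a)]
    nlinarith
  have hfin : ∫ x, ((1/2) * (w x ^ 2 * q x) - 2 * gr w x) ≤ 0 := by
    rw [← hzero]
    exact integral_mono ((i1.const_mul _).sub (i2.const_mul _)) (integrable_finsetSum _ fun i _ => hi i) key
  rw [integral_sub (i1.const_mul _) (i2.const_mul _), integral_const_mul, integral_const_mul] at hfin
  change ∫ x, w x ^ 2 * q x ≤ _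
  linarith

lemma hardy_cut (hn : 3 ≤ n) {f : Eucl n → ℝ} (hf : ContDiff ℝ 1 f) (hg : Integrable (gr f))
    {ε R : ℝ} (hε : 0 < ε) (hR : 0 < R) :
    ∫ x, (psi (‖x‖ ^ 2 / R ^ 2) * f x) ^ 2 * (ε ^ 2 + ‖x‖ ^ 2)⁻¹ ≤
      8 * (∫ x, gr f x) + 64 * Mpsi ^ 2 / R ^ 2 * ∫ x in Metric.closedBall 0 (2 * R), f x ^ 2 := by
  have hpc : ContDiff ℝ 1 (fun x : Eucl n => psi (‖x‖ ^ 2 / R ^ 2)) :=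
    (contDiff_psi.of_le (by exact_mod_cast le_top)).comp ((contDiff_id.norm_sq ℝ).div_const _)
  set w : Eucl n → ℝ := fun x => psi (‖x‖ ^ 2 / R ^ 2) * f x with hwd
  have hw : ContDiff ℝ 1 w := hpc.mul hf
  have hs : HasCompactSupport w := by
    refine hasCompactSupport_of_ball (ρ := 2 * R) fun x hx => ?_
    rw [hwd]; dsimp only
    rw [psi_zero, zero_mul]
    rw [le_div_iff₀ (by positivity)]
    nlinarith
  have h1 := hardy hn hw hs hε
  have i2 : Integrable (gr w) := by
    refine (continuous_gr hw).integrable_of_hasCompactSupport ?_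
    exact (hs.fderiv (𝕜 := ℝ)).comp_left (g := fun L : Eucl n →L[ℝ] ℝ =>
      ∑ i, (L (EuclideanSpace.single i 1)) ^ 2) (by simp)
  set B := Metric.closedBall (0 : Eucl n) (2 * R) with hB
  have hBm : MeasurableSet B := Metric.isClosed_closedBall.measurableSet
  have i3 : IntegrableOn (fun x => f x ^ 2) B :=
    (hf.continuous.pow 2).continuousOn.integrableOn_compact (isCompact_closedBall _ _)
  have i4 : Integrable (B.indicator fun x => f x ^ 2) := i3.integrable_indicator hBm
  have key : ∀ x, gr w x ≤ 2 * gr f x + 16 * Mpsi ^ 2 / R ^ 2 * B.indicator (fun x => f x ^ 2) x := by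
    intro x
    set z := psi (‖x‖ ^ 2 / R ^ 2) with hz
    set z1 := deriv psi (‖x‖ ^ 2 / R ^ 2) with hz1
    have hd : HasFDerivAt (fun y : Eucl n => psi (‖y‖ ^ 2 / R ^ 2)) ((z1 / R ^ 2) • (2 • innerSL ℝ x)) x := by
      have h1 : HasDerivAt (fun σ : ℝ => psi (σ / R ^ 2)) (z1 / R ^ 2) (‖x‖ ^ 2) := by
        have := (psi_hasDerivAt (‖x‖ ^ 2 / R ^ 2)).comp (‖x‖ ^ 2) ((hasDerivAt_id (‖x‖ ^ 2)).div_const (R ^ 2))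
        refine this.congr_deriv ?_
        ring
      exact hasFDerivAt_rad h1
    have hwd' : ∀ i, fderiv ℝ w x (EuclideanSpace.single i 1) =
        z * fderiv ℝ f x (EuclideanSpace.single i 1) + f x * (z1 / R ^ 2 * (2 * x i)) := by
      intro i
      have h4 : HasFDerivAt w _ x := hd.mul (hf.differentiable one_ne_zero x).hasFDerivAt
      rw [h4.fderiv]
      simp [inner_single_r]
      left; rfl
    have b1 : gr w x ≤ 2 * gr f x + 8 * f x ^ 2 * (z1 / R ^ 2) ^ 2 * ‖x‖ ^ 2 := by
      unfold gr
      rw [EuclideanSpace.real_norm_sq_eq, Finset.mul_sum, Finset.mul_sum, ← Finset.sum_add_distrib]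
      refine Finset.sum_le_sum fun i _ => ?_
      rw [hwd' i]
      set d := fderiv ℝ f x (EuclideanSpace.single i 1)
      have hz0 : 0 ≤ z := psi_nonneg _
      have hz1' : z ≤ 1 := psi_le_one _
      have hzz : z ^ 2 ≤ 1 := by nlinarith
      have : z ^ 2 * d ^ 2 ≤ 1 * d ^ 2 := by gcongr
      nlinarith [sq_nonneg (z * d - f x * (z1 / R ^ 2 * (2 * x i)))]
    refine b1.trans (by
      refine add_le_add le_rfl ?_
      by_cases h0 : z1 = 0
      · rw [h0]; simp
        have : 0 ≤ B.indicator (fun x => f x ^ 2) x := indicator_nonneg (fun _ _ => sq_nonneg _) _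
        positivity
      · have hsup := (dpsi_supp (Or.inl h0)).2
        rw [div_le_iff₀ (by positivity)] at hsup
        have hxB : x ∈ B := by
          rw [hB, mem_closedBall_zero_iff]
          nlinarith [norm_nonneg x]
        rw [indicator_of_mem hxB]
        have hM : z1 ^ 2 ≤ Mpsi ^ 2 := sq_le_sq' (abs_le.1 (dpsi_le _)).1 (abs_le.1 (dpsi_le _)).2
        calc 8 * f x ^ 2 * (z1 / R ^ 2) ^ 2 * ‖x‖ ^ 2 = 8 * f x ^ 2 * (z1 ^ 2 / R ^ 4) * ‖x‖ ^ 2 := by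
              rw [div_pow]; ring
          _ ≤ 8 * f x ^ 2 * (Mpsi ^ 2 / R ^ 4) * (2 * R ^ 2) := by gcongr
          _ = _ := by field_simp; ring)
  have h2 : ∫ x, gr w x ≤ ∫ x, (2 * gr f x + 16 * Mpsi ^ 2 / R ^ 2 * B.indicator (fun x => f x ^ 2) x) :=
    integral_mono i2 ((hg.const_mul _).add (i4.const_mul _)) key
  rw [integral_add (hg.const_mul _) (i4.const_mul _), integral_const_mul, integral_const_mul,
    integral_indicator hBm] at h2
  refine h1.trans ((mul_le_mul_of_nonneg_left h2 (by norm_num)).trans_eq ?_)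
  ring

end

end Mor


namespace Mor

open Set Filter Topology

noncomputable section

variable {n : ℕ}

/-- truncated weight -/
def Kc (ε R σ : ℝ) : ℝ := psi (σ / R ^ 2) * Hw ε σ
/-- truncated zeroth order weight -/
def Fc (n : ℕ) (ε R σ : ℝ) : ℝ := psi (σ / R ^ 2) * Gw n ε σ
/-- its derivative -/
def Fc1 (n : ℕ) (ε R σ : ℝ) : ℝ :=
  deriv psi (σ / R ^ 2) / R ^ 2 * Gw n ε σ + psi (σ / R ^ 2) * Gw1 n ε σ

section
variable {ε R σ : ℝ}

lemma psi_scaled_deriv : HasDerivAt (fun σ : ℝ => psi (σ / R ^ 2)) (deriv psi (σ / R ^ 2) / R ^ 2) σ := by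
  have := (psi_hasDerivAt (σ / R ^ 2)).comp σ ((hasDerivAt_id σ).div_const (R ^ 2))
  refine this.congr_deriv ?_
  ring

lemma dpsi_scaled_deriv : HasDerivAt (fun σ : ℝ => deriv psi (σ / R ^ 2) / R ^ 2)
    (deriv (deriv psi) (σ / R ^ 2) / R ^ 4) σ := by
  have := ((dpsi_hasDerivAt (σ / R ^ 2)).comp σ ((hasDerivAt_id σ).div_const (R ^ 2))).div_const (R ^ 2)
  refine this.congr_deriv ?_
  ring

lemma Kc_deriv (hε : 0 < ε) (hσ : 0 ≤ σ) : HasDerivAt (Kc ε R)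
    (deriv psi (σ / R ^ 2) / R ^ 2 * Hw ε σ + psi (σ / R ^ 2) * Hw1 ε σ) σ :=
  psi_scaled_deriv.mul (Hw_deriv hε hσ)

lemma Fc_deriv (hε : 0 < ε) (hσ : 0 ≤ σ) : HasDerivAt (Fc n ε R) (Fc1 n ε R σ) σ :=
  psi_scaled_deriv.mul (Gw_deriv hε hσ)

lemma Fc1_deriv (hε : 0 < ε) (hσ : 0 ≤ σ) : HasDerivAt (Fc1 n ε R)
    (deriv (deriv psi) (σ / R ^ 2) / R ^ 4 * Gw n ε σ +
      2 * (deriv psi (σ / R ^ 2) / R ^ 2) * Gw1 n ε σ + psi (σ / R ^ 2) * Gw2 n ε σ) σ := by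
  refine ((dpsi_scaled_deriv.mul (Gw_deriv hε hσ)).add
    (psi_scaled_deriv.mul (Gw1_deriv hε hσ))).congr_deriv ?_
  ring

end

section
variable {ε : ℝ}

lemma cd_Sw (hε : 0 < ε) : ContDiff ℝ (⊤ : ℕ∞) (fun p : ST n => Sw ε (‖p.2‖ ^ 2)) := by
  unfold Sw
  refine ContDiff.sqrt (contDiff_const.add (contDiff_snd.norm_sq ℝ)) fun p => ?_
  positivity

lemma cd_Swi (hε : 0 < ε) : ContDiff ℝ (⊤ : ℕ∞) (fun p : ST n => (Sw ε (‖p.2‖ ^ 2))⁻¹) :=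
  (cd_Sw hε).inv fun p => (Sw_pos hε (sq_nonneg _)).ne'

lemma cd_Hw (hε : 0 < ε) : ContDiff ℝ (⊤ : ℕ∞) (fun p : ST n => Hw ε (‖p.2‖ ^ 2)) :=
  (contDiff_const.add (cd_Sw hε)).inv fun p => (add_pos hε (Sw_pos hε (sq_nonneg _))).ne'

lemma cd_Hw1 (hε : 0 < ε) : ContDiff ℝ (⊤ : ℕ∞) (fun p : ST n => Hw1 ε (‖p.2‖ ^ 2)) := by
  unfold Hw1
  refine (((cd_Hw hε).pow 2).div (contDiff_const.mul (cd_Sw hε)) fun p => ?_).neg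
  exact mul_ne_zero two_ne_zero (Sw_pos hε (sq_nonneg _)).ne'

lemma cd_Gw (hε : 0 < ε) : ContDiff ℝ (⊤ : ℕ∞) (fun p : ST n => Gw n ε (‖p.2‖ ^ 2)) :=
  contDiff_const.mul ((cd_Swi hε).add (contDiff_const.mul (cd_Hw hε)))

lemma cd_Gw1 (hε : 0 < ε) : ContDiff ℝ (⊤ : ℕ∞) (fun p : ST n => Gw1 n ε (‖p.2‖ ^ 2)) :=
  contDiff_const.mul (((cd_Swi hε).pow 3).add
    (contDiff_const.mul (((cd_Hw hε).pow 2).mul (cd_Swi hε))))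

lemma cd_psi (R : ℝ) : ContDiff ℝ (⊤ : ℕ∞) (fun p : ST n => psi (‖p.2‖ ^ 2 / R ^ 2)) :=
  contDiff_psi.comp ((contDiff_snd.norm_sq ℝ).div_const _)

lemma cd_dpsi (R : ℝ) : ContDiff ℝ (⊤ : ℕ∞) (fun p : ST n => deriv psi (‖p.2‖ ^ 2 / R ^ 2)) :=
  contDiff_dpsi.comp ((contDiff_snd.norm_sq ℝ).div_const _)

lemma cd_Kc (hε : 0 < ε) (R : ℝ) : ContDiff ℝ (⊤ : ℕ∞) (fun p : ST n => Kc ε R (‖p.2‖ ^ 2)) :=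
  (cd_psi R).mul (cd_Hw hε)

lemma cd_Fc (hε : 0 < ε) (R : ℝ) : ContDiff ℝ (⊤ : ℕ∞) (fun p : ST n => Fc n ε R (‖p.2‖ ^ 2)) :=
  (cd_psi R).mul (cd_Gw hε)

lemma cd_Fc1 (hε : 0 < ε) (R : ℝ) : ContDiff ℝ (⊤ : ℕ∞) (fun p : ST n => Fc1 n ε R (‖p.2‖ ^ 2)) :=
  (((cd_dpsi R).div_const _).mul (cd_Gw hε)).add ((cd_psi R).mul (cd_Gw1 hε))

lemma cd_Pm (hε : 0 < ε) (R : ℝ) {U : ST n → ℝ} (hU : ContDiff ℝ (⊤ : ℕ∞) U) :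
    ContDiff ℝ (⊤ : ℕ∞) (Pm (Kc ε R) (Fc n ε R) U) :=
  (contDiff_D hU _).mul (((cd_Kc hε R).mul (contDiff_Aa hU)).add ((cd_Fc hε R).mul hU))

lemma cd_Qm (hε : 0 < ε) (R : ℝ) {U : ST n → ℝ} (hU : ContDiff ℝ (⊤ : ℕ∞) U) (j : Fin n) :
    ContDiff ℝ (⊤ : ℕ∞) (Qm (Kc ε R) (Fc n ε R) (Fc1 n ε R) U j) :=
  ((contDiff_D hU _).mul (((cd_Kc hε R).mul (contDiff_Aa hU)).add ((cd_Fc hε R).mul hU))).add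
    ((contDiff_coord j).mul (((cd_Kc hε R).mul (contDiff_const.mul
      (((contDiff_D hU _).pow 2).sub (contDiff_Nn hU)))).sub ((cd_Fc1 hε R).mul (hU.pow 2))))

end

lemma psi_far {R : ℝ} (hR : 0 < R) {x : Eucl n} (hx : 2 * R ≤ ‖x‖) :
    psi (‖x‖ ^ 2 / R ^ 2) = 0 ∧ deriv psi (‖x‖ ^ 2 / R ^ 2) = 0 ∧
      deriv (deriv psi) (‖x‖ ^ 2 / R ^ 2) = 0 := by
  have h : 2 < ‖x‖ ^ 2 / R ^ 2 := by
    rw [lt_div_iff₀ (by positivity)]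
    nlinarith
  exact ⟨psi_zero h.le, dpsi_gt h⟩

/-- the main density -/
def md (ε : ℝ) (U : ST n → ℝ) (p : ST n) : ℝ :=
  Hw ε (‖p.2‖ ^ 2) * Nn U p + 2 * Hw1 ε (‖p.2‖ ^ 2) * Aa U p ^ 2

lemma cd_md {ε : ℝ} (hε : 0 < ε) {U : ST n → ℝ} (hU : ContDiff ℝ (⊤ : ℕ∞) U) :
    ContDiff ℝ (⊤ : ℕ∞) (md ε U) :=
  ((cd_Hw hε).mul (contDiff_Nn hU)).add ((contDiff_const.mul (cd_Hw1 hε)).mul ((contDiff_Aa hU).pow 2))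

lemma slice_gr {U : ST n → ℝ} (hU : ContDiff ℝ (⊤ : ℕ∞) U) (t : ℝ) (x : Eucl n) :
    gr (fun y => U (t, y)) x = Nn U (t, x) := by
  unfold gr Nn
  refine Finset.sum_congr rfl fun i _ => ?_
  rw [slice_fderiv (hU.differentiable (by simp) _)]
  rfl

lemma Pm_bound (hn : 3 ≤ n) {ε R L E t : ℝ} (hε : 0 < ε) (hR : 0 < R) {U : ST n → ℝ}
    (hU : IsSol U)
    (hi : Integrable (fun x => en U (t, x))) (hE : ∫ x, en U (t, x) ≤ E)
    (hL : ∫ x in Metric.closedBall 0 (2 * R), U (t, x) ^ 2 ≤ L * R ^ 2 * E) :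
    |∫ x, Pm (Kc ε R) (Fc n ε R) U (t, x)| ≤
      (1 + n ^ 2 / 2 * (8 + 64 * Mpsi ^ 2 * L)) * E := by
  have hs := hU.smooth
  have hf : ContDiff ℝ 1 (fun x : Eucl n => U (t, x)) :=
    (hs.of_le (by exact_mod_cast le_top)).comp (contDiff_const.prodMk contDiff_id)
  have hNc : Continuous (fun x => Nn U (t, x)) := (contDiff_Nn hs).continuous.comp (by fun_prop)
  have hNi : Integrable (fun x => Nn U (t, x)) := by
    refine hi.mono' hNc.aestronglyMeasurable (ae_of_all _ fun x => ?_)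
    rw [Real.norm_of_nonneg (Nn_nonneg _ _)]
    unfold en; nlinarith [sq_nonneg (D (eT n) U (t, x))]
  have hgi : Integrable (gr fun x => U (t, x)) := by
    refine hNi.congr (ae_of_all _ fun x => (slice_gr hs t x).symm)
  have hNE : ∫ x, Nn U (t, x) ≤ E := by
    refine le_trans (integral_mono hNi hi fun x => ?_) hE
    unfold en; simp only; nlinarith [sq_nonneg (D (eT n) U (t, x))]
  have hH := hardy_cut hn hf hgi hε hR
  simp_rw [slice_gr hs] at hH
  set h : Eucl n → ℝ := fun x => (psi (‖x‖ ^ 2 / R ^ 2) * U (t, x)) ^ 2 * (ε ^ 2 + ‖x‖ ^ 2)⁻¹ with hh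
  have hhc : Continuous h := by
    refine Continuous.mul (Continuous.pow (Continuous.mul ?_ hf.continuous) 2) ?_
    · exact contDiff_psi.continuous.comp (by fun_prop)
    · exact Continuous.inv₀ (by fun_prop) fun x => by positivity
  have hhi : Integrable h := by
    refine hhc.integrable_of_hasCompactSupport (hasCompactSupport_of_ball (ρ := 2 * R) fun x hx => ?_)
    simp only [hh]; rw [(psi_far hR hx).1]; simp
  have hpt : ∀ x, |Pm (Kc ε R) (Fc n ε R) U (t, x)| ≤ en U (t, x) + n ^ 2 / 2 * h x := by
    intro x
    have hσ : 0 ≤ ‖x‖ ^ 2 := sq_nonneg _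
    have hS := Sw_pos hε hσ
    have hSs := Sw_sq hε hσ
    have hH0 := Hw_pos hε hσ
    have hHS := Sw_inv_ge hε hσ
    obtain ⟨g0, g1, -⟩ := Gw_bound hn hε hσ
    have z0 := psi_nonneg (‖x‖ ^ 2 / R ^ 2)
    have z1 := psi_le_one (‖x‖ ^ 2 / R ^ 2)
    have hA := Aa_sq_le U (t, x)
    have hN := Nn_nonneg U (t, x)
    have hq : ((Sw ε (‖x‖ ^ 2))⁻¹) ^ 2 = (ε ^ 2 + ‖x‖ ^ 2)⁻¹ := by rw [inv_pow, hSs]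
    have hq1 : (ε ^ 2 + ‖x‖ ^ 2)⁻¹ * ‖x‖ ^ 2 ≤ 1 := by
      have : (ε ^ 2 + ‖x‖ ^ 2)⁻¹ * (ε ^ 2 + ‖x‖ ^ 2) = 1 := inv_mul_cancel₀ (by positivity)
      have : 0 ≤ (ε ^ 2 + ‖x‖ ^ 2)⁻¹ * ε ^ 2 := by positivity
      nlinarith
    have k2 : (Kc ε R (‖x‖ ^ 2)) ^ 2 ≤ (ε ^ 2 + ‖x‖ ^ 2)⁻¹ := by
      rw [← hq]
      have : Kc ε R (‖x‖ ^ 2) ≤ (Sw ε (‖x‖ ^ 2))⁻¹ := by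
        unfold Kc; nlinarith
      have h0 : 0 ≤ Kc ε R (‖x‖ ^ 2) := by unfold Kc; positivity
      gcongr
    have kA : (Kc ε R (‖x‖ ^ 2) * Aa U (t, x)) ^ 2 ≤ Nn U (t, x) := by
      rw [mul_pow]
      calc _ ≤ (ε ^ 2 + ‖x‖ ^ 2)⁻¹ * (‖x‖ ^ 2 * Nn U (t, x)) := by gcongr
        _ = ((ε ^ 2 + ‖x‖ ^ 2)⁻¹ * ‖x‖ ^ 2) * Nn U (t, x) := by ring
        _ ≤ 1 * Nn U (t, x) := by gcongr
        _ = _ := one_mul _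
    have fV : (Fc n ε R (‖x‖ ^ 2) * U (t, x)) ^ 2 ≤ n ^ 2 * h x := by
      have e : n ^ 2 * h x = (psi (‖x‖ ^ 2 / R ^ 2) * (n * (Sw ε (‖x‖ ^ 2))⁻¹)) ^ 2 * U (t, x) ^ 2 := by
        simp only [hh]; rw [← hq]; ring
      rw [e, mul_pow]
      unfold Fc
      gcongr
    unfold Pm en
    simp only
    set d := D (eT n) U (t, x)
    set a := Kc ε R (‖x‖ ^ 2) * Aa U (t, x)
    set b := Fc n ε R (‖x‖ ^ 2) * U (t, x)
    rw [abs_le]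
    constructor <;> nlinarith [sq_nonneg (d + a), sq_nonneg (d - a), sq_nonneg (d + b), sq_nonneg (d - b)]
  calc |∫ x, Pm (Kc ε R) (Fc n ε R) U (t, x)| ≤ ∫ x, |Pm (Kc ε R) (Fc n ε R) U (t, x)| :=
        abs_integral_le_integral_abs
    _ ≤ ∫ x, (en U (t, x) + n ^ 2 / 2 * h x) :=
        integral_mono_of_nonneg (ae_of_all _ fun _ => abs_nonneg _) (hi.add (hhi.const_mul _))
          (ae_of_all _ hpt)
    _ = (∫ x, en U (t, x)) + n ^ 2 / 2 * ∫ x, h x := by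
        rw [integral_add hi (hhi.const_mul _), integral_const_mul]
    _ ≤ E + n ^ 2 / 2 * (8 * E + 64 * Mpsi ^ 2 / R ^ 2 * (L * R ^ 2 * E)) := by
        have : ∫ x, h x ≤ 8 * E + 64 * Mpsi ^ 2 / R ^ 2 * (L * R ^ 2 * E) :=
          hH.trans (by gcongr)
        gcongr
    _ = _ := by field_simp

end

end Mor


namespace Mor

open Set Filter Topology

noncomputable section

variable {n : ℕ}

/-- divergence density -/
def dv (ε R : ℝ) (U : ST n → ℝ) (p : ST n) : ℝ :=
  D (eT n) (Pm (Kc ε R) (Fc n ε R) U) p - ∑ j, D (eX j) (Qm (Kc ε R) (Fc n ε R) (Fc1 n ε R) U j) p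

lemma continuous_dv {ε R : ℝ} (hε : 0 < ε) {U : ST n → ℝ} (hU : IsSol U) :
    Continuous (dv ε R U) := by
  have hle : (1 : WithTop ℕ∞) ≤ ((⊤ : ℕ∞) : WithTop ℕ∞) := by exact_mod_cast le_top
  unfold dv
  refine (continuous_D ((cd_Pm hε R hU.smooth).of_le hle) _).sub
    (continuous_finsetSum _ fun j _ => continuous_D ((cd_Qm hε R hU.smooth j).of_le hle) _)

lemma dv_le (hn : 3 ≤ n) {ε R : ℝ} (hε : 0 < ε) (hR : 0 < R) {U : ST n → ℝ} (hU : IsSol U)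
    (t : ℝ) (x : Eucl n) :
    dv ε R U (t, x) ≤ -(psi (‖x‖ ^ 2 / R ^ 2) * md ε U (t, x)) +
      Mpsi * (6 + 12 * n ^ 2) / R * en U (t, x) +
      Mpsi * (6 + 12 * n ^ 2) / R ^ 3 *
        (Metric.closedBall 0 (2 * R)).indicator (fun x => U (t, x) ^ 2) x := by
  have hσ : 0 ≤ ‖x‖ ^ 2 := sq_nonneg _
  unfold dv
  rw [mor_identity hU (t, x) (Kc_deriv hε hσ) (Fc_deriv hε hσ) (Fc1_deriv hε hσ)]
  have h := weight_ineq hn (M := Mpsi) (z := psi (‖x‖ ^ 2 / R ^ 2)) (N := Nn U (t, x))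
    (A := Aa U (t, x)) (ut := D (eT n) U (t, x)) (u := U (t, x))
    (B := (Metric.closedBall 0 (2 * R)).indicator (fun x => U (t, x) ^ 2) x)
    hε hσ hR (psi_nonneg _) (dpsi_le (‖x‖ ^ 2 / R ^ 2)) (ddpsi_le (‖x‖ ^ 2 / R ^ 2))
    (by
      intro h0
      obtain ⟨h1, h2⟩ := dpsi_supp h0
      rw [le_div_iff₀ (by positivity)] at h1
      rw [div_le_iff₀ (by positivity)] at h2
      constructor <;> linarith)
    (Aa_sq_le U (t, x)) (Nn_nonneg _ _) (indicator_nonneg (fun _ _ => sq_nonneg _) _)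
    (by
      intro h2
      rw [indicator_of_mem]
      rw [mem_closedBall_zero_iff]
      nlinarith [norm_nonneg x])
  exact h

lemma dv_far {ε R : ℝ} (hε : 0 < ε) (hR : 0 < R) {U : ST n → ℝ} (hU : IsSol U)
    (t : ℝ) (x : Eucl n) (hx : 2 * R ≤ ‖x‖) : dv ε R U (t, x) = 0 := by
  have hσ : 0 ≤ ‖x‖ ^ 2 := sq_nonneg _
  unfold dv
  rw [mor_identity hU (t, x) (Kc_deriv hε hσ) (Fc_deriv hε hσ) (Fc1_deriv hε hσ)]
  obtain ⟨a, b, c⟩ := psi_far hR hx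
  simp only [Kc, Fc, Fc1]
  rw [a, b, c]
  simp

lemma mor_cut (hn : 3 ≤ n) {ε R L : ℝ} (hε : 0 < ε) (hR : 0 < R) {U : ST n → ℝ} (hU : IsSol U)
    (h0 : Integrable (fun x => en U (0, x)))
    (hL : ∀ t ∈ Icc 0 R, ∫ x in Metric.closedBall 0 (2 * R), U (t, x) ^ 2 ≤
      L * R ^ 2 * ∫ x, en U (0, x)) :
    ∫ t in (0:ℝ)..R, ∫ x, psi (‖x‖ ^ 2 / R ^ 2) * md ε U (t, x) ≤
      (2 * (1 + n ^ 2 / 2 * (8 + 64 * Mpsi ^ 2 * L)) + Mpsi * (6 + 12 * n ^ 2) * (1 + L)) *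
        ∫ x, en U (0, x) := by
  have hle : (1 : WithTop ℕ∞) ≤ ((⊤ : ℕ∞) : WithTop ℕ∞) := by exact_mod_cast le_top
  set E := ∫ x, en U (0, x) with hE
  set C1 := Mpsi * (6 + 12 * (n:ℝ) ^ 2) with hC1
  have hC1p : 0 ≤ C1 := mul_nonneg Mpsi_nonneg (by positivity)
  have hs := hU.smooth
  have hdiv := div_lemma (a := 0) (b := R) (ρ := 2 * R) ((cd_Pm hε R hs).of_le hle)
    (fun j => (cd_Qm hε R hs j).of_le hle) hR.le
    (fun t _ x hx => by
      obtain ⟨a, b, c⟩ := psi_far hR hx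
      simp only [Pm, Kc, Fc]; rw [a]; simp)
    (fun j t _ x hx => by
      obtain ⟨a, b, c⟩ := psi_far hR hx
      simp only [Qm, Kc, Fc, Fc1]; rw [a, b]; simp)
  change ∫ t in (0:ℝ)..R, ∫ x, dv ε R U (t, x) = _ at hdiv
  set m : ST n → ℝ := fun p => psi (‖p.2‖ ^ 2 / R ^ 2) * md ε U p with hm
  have hmc : Continuous m := ((cd_psi R).mul (cd_md hε hs)).continuous
  have hmf : ∀ t x, 2 * R ≤ ‖x‖ → m (t, x) = 0 := by
    intro t x hx; simp only [hm]; rw [(psi_far hR hx).1]; simp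
  have hdc := continuous_dv (R := R) hε hU
  have im := (integrable_slab hmc (a := 0) (b := R) (ρ := 2 * R) fun t _ x hx => hmf t x hx).integral_prod_left
  have id := (integrable_slab hdc (a := 0) (b := R) (ρ := 2 * R)
    fun t _ x hx => dv_far hε hR hU t x hx).integral_prod_left
  have imI : IntervalIntegrable (fun t => ∫ x, m (t, x)) volume 0 R :=
    (intervalIntegrable_iff_integrableOn_Ioc_of_le hR.le).2 im
  have idI : IntervalIntegrable (fun t => ∫ x, dv ε R U (t, x)) volume 0 R :=
    (intervalIntegrable_iff_integrableOn_Ioc_of_le hR.le).2 id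
  have slice : ∀ t ∈ Icc 0 R, ∫ x, m (t, x) ≤ -(∫ x, dv ε R U (t, x)) + C1 * (1 + L) * E / R := by
    intro t ht
    obtain ⟨hei, hel⟩ := energy hU h0 ht.1
    have hBm : MeasurableSet (Metric.closedBall (0 : Eucl n) (2 * R)) :=
      Metric.isClosed_closedBall.measurableSet
    have hUc : Continuous (fun x => U (t, x) ^ 2) := (hs.continuous.comp (by fun_prop)).pow 2
    have i4 : Integrable ((Metric.closedBall (0 : Eucl n) (2 * R)).indicator fun x => U (t, x) ^ 2) :=
      (hUc.continuousOn.integrableOn_compact (isCompact_closedBall _ _)).integrable_indicator hBm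
    have i1 : Integrable (fun x => m (t, x)) :=
      (hmc.comp (by fun_prop : Continuous fun x : Eucl n => ((t, x) : ST n))).integrable_of_hasCompactSupport
        (hasCompactSupport_of_ball (hmf t))
    have i2 : Integrable (fun x => dv ε R U (t, x)) :=
      (hdc.comp (by fun_prop : Continuous fun x : Eucl n => ((t, x) : ST n))).integrable_of_hasCompactSupport
        (hasCompactSupport_of_ball (dv_far hε hR hU t))
    have i2n : Integrable (fun x => -(dv ε R U (t, x))) := i2.neg
    have i34 : Integrable (fun x => C1 / R * en U (t, x) + C1 / R ^ 3 *
        (Metric.closedBall 0 (2 * R)).indicator (fun x => U (t, x) ^ 2) x) :=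
      (hei.const_mul _).add (i4.const_mul _)
    have h1 : ∫ x, m (t, x) ≤ ∫ x, (-(dv ε R U (t, x)) + (C1 / R * en U (t, x) + C1 / R ^ 3 *
        (Metric.closedBall 0 (2 * R)).indicator (fun x => U (t, x) ^ 2) x)) := by
      refine integral_mono i1 (i2n.add i34) fun x => ?_
      have := dv_le hn hε hR hU t x
      simp only [hm]
      linarith
    rw [integral_add i2n i34,
      integral_add (hei.const_mul _) (i4.const_mul _), integral_const_mul, integral_const_mul,
      integral_indicator hBm, integral_neg] at h1
    refine h1.trans ?_
    have := hL t ht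
    calc _ ≤ -(∫ x, dv ε R U (t, x)) + (C1 / R * E + C1 / R ^ 3 * (L * R ^ 2 * E)) := by gcongr
      _ = _ := by field_simp
  have idn : IntervalIntegrable (fun t => -∫ x, dv ε R U (t, x)) volume 0 R := idI.neg
  have hfin : ∫ t in (0:ℝ)..R, ∫ x, m (t, x) ≤
      ∫ t in (0:ℝ)..R, (-(∫ x, dv ε R U (t, x)) + C1 * (1 + L) * E / R) :=
    intervalIntegral.integral_mono_on hR.le imI (idn.add (by simp)) slice
  rw [intervalIntegral.integral_add idn (by simp), intervalIntegral.integral_neg, hdiv,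
    intervalIntegral.integral_const] at hfin
  have p1 := Pm_bound hn hε hR hU h0 le_rfl (hL 0 ⟨le_rfl, hR.le⟩)
  obtain ⟨hei, hel⟩ := energy hU h0 hR.le
  have p2 := Pm_bound hn hε hR hU hei hel (hL R ⟨hR.le, le_rfl⟩)
  have e : (R - 0) • (C1 * (1 + L) * E / R) = C1 * (1 + L) * E := by
    rw [smul_eq_mul, sub_zero]; field_simp
  rw [e] at hfin
  have q1 := (abs_le.1 p1).2
  have q2 := (abs_le.1 p2).1
  change ∫ t in (0:ℝ)..R, ∫ x, m (t, x) ≤ _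
  linarith

end

end Mor


namespace Mor

open Set Filter Topology

noncomputable section

variable {n : ℕ}

lemma D_sub_const (U : ST n → ℝ) (c : ℝ) (v : ST n) : D v (fun p => U p - c) = D v U := by
  funext p; unfold D; rw [fderiv_sub_const]

lemma IsSol.sub_const {U : ST n → ℝ} (hU : IsSol U) (c : ℝ) : IsSol (fun p => U p - c) := by
  refine ⟨hU.smooth.sub contDiff_const, fun p => ?_⟩
  simp only [D_sub_const]
  exact hU.wave p

lemma en_sub_const (U : ST n → ℝ) (c : ℝ) : en (fun p => U p - c) = en U := by
  funext p; simp only [en, Nn, D_sub_const]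

lemma md_sub_const (ε : ℝ) (U : ST n → ℝ) (c : ℝ) : md ε (fun p => U p - c) = md ε U := by
  funext p; simp only [md, Nn, Aa, D_sub_const]

/-- constant in the local L2 bound -/
def Lc (n : ℕ) : ℝ := 32 * 2 ^ n + 2

lemma exists_const {U : ST n → ℝ} (hU : IsSol U) (h0 : Integrable (fun x => en U (0, x)))
    {R : ℝ} (hR : 0 < R) : ∃ c : ℝ, ∀ t ∈ Icc 0 R,
      ∫ x in Metric.closedBall 0 (2 * R), (U (t, x) - c) ^ 2 ≤
      Lc n * R ^ 2 * ∫ x, en U (0, x) := by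
  have hs := hU.smooth
  have hf : ∀ t, ContDiff ℝ 1 (fun x : Eucl n => U (t, x)) := fun t =>
    (hs.of_le (by exact_mod_cast le_top)).comp (contDiff_const.prodMk contDiff_id)
  obtain ⟨c, hc⟩ := poincare (hf 0) (ρ := 2 * R) (by positivity)
  refine ⟨c, fun t ht => ?_⟩
  set E := ∫ x, en U (0, x) with hE
  have hE0 : 0 ≤ E := integral_nonneg fun x => en_nonneg _ _
  have hp : ∫⁻ x in Metric.closedBall (0 : Eucl n) (2 * R), ENNReal.ofReal ((U (0, x) - c) ^ 2) ≤
      ENNReal.ofReal (16 * 2 ^ n * R ^ 2 * E) := by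
    refine hc.trans ?_
    have h1 : ∫⁻ x, ENNReal.ofReal (gr (fun x => U (0, x)) x) ≤ ENNReal.ofReal E := by
      rw [hE, ofReal_integral_eq_lintegral_ofReal h0 (ae_of_all _ fun x => en_nonneg _ _)]
      refine lintegral_mono fun x => ENNReal.ofReal_le_ofReal ?_
      rw [slice_gr hs]
      unfold en; nlinarith [sq_nonneg (D (eT n) U (0, x))]
    change _ * _ * ∫⁻ x, ENNReal.ofReal (gr (fun x => U (0, x)) x) ≤ _
    calc _ ≤ ENNReal.ofReal (4 * (2 * R) ^ 2) * 2 ^ n * ENNReal.ofReal E := by gcongr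
      _ = ENNReal.ofReal (4 * (2 * R) ^ 2 * 2 ^ n * E) := by
          rw [ENNReal.ofReal_mul (p := 4 * (2 * R) ^ 2 * 2 ^ n) (by positivity),
            ENNReal.ofReal_mul (p := 4 * (2 * R) ^ 2) (by positivity),
            ENNReal.ofReal_pow two_pos.le]
          simp
      _ = _ := by congr 1; ring
  have htd := time_diff hU h0 ht.1
  set B := Metric.closedBall (0 : Eucl n) (2 * R)
  have hci : IntegrableOn (fun x => (U (t, x) - c) ^ 2) B :=
    (((hf t).continuous.sub continuous_const).pow 2).continuousOn.integrableOn_compact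
      (isCompact_closedBall _ _)
  have hm : ∀ s, Measurable (fun x => U (s, x)) := fun s => (hf s).continuous.measurable
  rw [← ENNReal.ofReal_le_ofReal_iff (by unfold Lc; positivity),
    ofReal_integral_eq_lintegral_ofReal hci (ae_of_all _ fun x => sq_nonneg _)]
  calc ∫⁻ x in B, ENNReal.ofReal ((U (t, x) - c) ^ 2)
      ≤ ∫⁻ x in B, (2 * ENNReal.ofReal ((U (0, x) - c) ^ 2) +
          2 * ENNReal.ofReal ((U (t, x) - U (0, x)) ^ 2)) := by
        refine lintegral_mono fun x => ?_
        rw [show (2 : ℝ≥0∞) = ENNReal.ofReal 2 by simp, ← ENNReal.ofReal_mul two_pos.le,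
          ← ENNReal.ofReal_mul two_pos.le, ← ENNReal.ofReal_add (by positivity) (by positivity)]
        refine ENNReal.ofReal_le_ofReal ?_
        nlinarith [sq_nonneg (U (0, x) - c - (U (t, x) - U (0, x)))]
    _ = 2 * (∫⁻ x in B, ENNReal.ofReal ((U (0, x) - c) ^ 2)) +
          2 * ∫⁻ x in B, ENNReal.ofReal ((U (t, x) - U (0, x)) ^ 2) := by
        rw [lintegral_add_right, lintegral_const_mul', lintegral_const_mul']
        · simp
        · simp
        · exact (((hm t).sub (hm 0)).pow_const 2).ennreal_ofReal.const_mul 2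
    _ ≤ 2 * ENNReal.ofReal (16 * 2 ^ n * R ^ 2 * E) + 2 * ENNReal.ofReal (R ^ 2 * E) := by
        have : ∫⁻ x in B, ENNReal.ofReal ((U (t, x) - U (0, x)) ^ 2) ≤ ENNReal.ofReal (R ^ 2 * E) := by
          refine (setLIntegral_le_lintegral _ _).trans (htd.trans (ENNReal.ofReal_le_ofReal ?_))
          have := ht.1
          have := ht.2
          gcongr
        gcongr
    _ = _ := by
        rw [show (2 : ℝ≥0∞) = ENNReal.ofReal 2 by simp, ← ENNReal.ofReal_mul two_pos.le,
          ← ENNReal.ofReal_mul two_pos.le, ← ENNReal.ofReal_add (by positivity) (by positivity)]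
        congr 1; unfold Lc; ring

/-- final constant -/
def Cn (n : ℕ) : ℝ :=
  2 * (1 + n ^ 2 / 2 * (8 + 64 * Mpsi ^ 2 * Lc n)) + Mpsi * (6 + 12 * n ^ 2) * (1 + Lc n)

lemma mor_R (hn : 3 ≤ n) {ε R : ℝ} (hε : 0 < ε) (hR : 0 < R) {U : ST n → ℝ} (hU : IsSol U)
    (h0 : Integrable (fun x => en U (0, x))) :
    ∫ t in (0:ℝ)..R, ∫ x, psi (‖x‖ ^ 2 / R ^ 2) * md ε U (t, x) ≤ Cn n * ∫ x, en U (0, x) := by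
  obtain ⟨c, hc⟩ := exists_const hU h0 hR
  have := mor_cut hn (L := Lc n) hε hR (hU.sub_const c) (by rwa [en_sub_const])
    (by rw [en_sub_const]; exact hc)
  rwa [en_sub_const, md_sub_const] at this

/-- squared radial derivative -/
def ra (U : ST n → ℝ) (p : ST n) : ℝ := (‖p.2‖⁻¹ * Aa U p) ^ 2

lemma ra_le (U : ST n → ℝ) (p : ST n) : ra U p ≤ Nn U p := by
  unfold ra
  rw [mul_pow]
  have h := Aa_sq_le U p
  have hN := Nn_nonneg U p
  by_cases hx : ‖p.2‖ = 0
  · rw [hx]; simpa using hN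
  · calc _ ≤ (‖p.2‖⁻¹) ^ 2 * (‖p.2‖ ^ 2 * Nn U p) := by gcongr
      _ = Nn U p := by field_simp

/-- target density -/
def Td (ε : ℝ) (U : ST n → ℝ) (p : ST n) : ℝ :=
  ε / (ε + ‖p.2‖) ^ 2 * ra U p + (ε + ‖p.2‖)⁻¹ * (Nn U p - ra U p)

lemma Td_nonneg {ε : ℝ} (hε : 0 < ε) (U : ST n → ℝ) (p : ST n) : 0 ≤ Td ε U p := by
  unfold Td
  have h1 : 0 ≤ ra U p := sq_nonneg _
  have h2 : 0 ≤ Nn U p - ra U p := sub_nonneg.2 (ra_le U p)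
  positivity

lemma Td_le {ε : ℝ} (hε : 0 < ε) (U : ST n → ℝ) (p : ST n) : Td ε U p ≤ 2 * md ε U p := by
  have hA : Aa U p ^ 2 = ‖p.2‖ ^ 2 * ra U p := by
    unfold ra
    by_cases hx : ‖p.2‖ = 0
    · have := Aa_sq_le U p
      rw [hx] at this ⊢
      nlinarith [sq_nonneg (Aa U p)]
    · field_simp
  have := weight_lower hε (norm_nonneg p.2) hA (sq_nonneg _) (ra_le U p)
  unfold Td md
  linarith

lemma measurable_Td {U : ST n → ℝ} (hU : ContDiff ℝ (⊤ : ℕ∞) U) (ε : ℝ) : Measurable (Td ε U) := by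
  have h1 := (contDiff_Nn hU).continuous.measurable
  have h2 := (contDiff_Aa hU).continuous.measurable
  unfold Td ra
  fun_prop

lemma mor_pos (hn : 3 ≤ n) {ε : ℝ} (hε : 0 < ε) {U : ST n → ℝ} (hU : IsSol U)
    (h0 : Integrable (fun x => en U (0, x))) :
    ∫⁻ t in Ioi (0:ℝ), ∫⁻ x, ENNReal.ofReal (Td ε U (t, x)) ≤
      ENNReal.ofReal (2 * Cn n * ∫ x, en U (0, x)) := by
  have hs := hU.smooth
  have hTm := (measurable_Td hs ε).ennreal_ofReal
  have hmd0 : ∀ p, 0 ≤ md ε U p := fun p => by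
    linarith [Td_le hε U p, Td_nonneg hε U p]
  set S : ℕ → Set (ST n) := fun k => Ioc (0:ℝ) k ×ˢ Metric.closedBall (0 : Eucl n) k with hS
  have hSU : (⋃ k, S k) = Ioi (0:ℝ) ×ˢ univ := by
    ext ⟨t, x⟩
    simp only [hS, mem_iUnion, mem_prod, mem_Ioc, mem_closedBall_zero_iff, mem_Ioi, mem_univ,
      and_true]
    constructor
    · rintro ⟨k, h, -⟩; exact h.1
    · intro h
      obtain ⟨k, hk⟩ := exists_nat_ge (max t ‖x‖)
      exact ⟨k, ⟨h, (le_max_left _ _).trans hk⟩, (le_max_right _ _).trans hk⟩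
  have hdir : Monotone S := fun j k hjk => by
    have : (j:ℝ) ≤ k := by exact_mod_cast hjk
    exact prod_mono (Ioc_subset_Ioc_right this) (Metric.closedBall_subset_closedBall this)
  have hall : ∫⁻ t in Ioi (0:ℝ), ∫⁻ x, ENNReal.ofReal (Td ε U (t, x)) =
      ∫⁻ p in ⋃ k, S k, ENNReal.ofReal (Td ε U p) ∂(volume.prod volume) := by
    rw [hSU, ← Measure.prod_restrict, Measure.restrict_univ, lintegral_prod _ hTm.aemeasurable]
  rw [hall, setLIntegral_iUnion_of_directed _ hdir.directed_le]
  refine iSup_le fun k => ?_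
  rcases Nat.eq_zero_or_pos k with rfl | hk
  · simp [hS]
  have hR : (0:ℝ) < k := by exact_mod_cast hk
  rw [hS, ← Measure.prod_restrict, lintegral_prod _ hTm.aemeasurable]
  have hmR := mor_R hn hε hR hU h0
  change ∫⁻ t in Ioc 0 (k:ℝ), ∫⁻ x in Metric.closedBall (0 : Eucl n) (k:ℝ),
    ENNReal.ofReal (Td ε U (t, x)) ≤ _
  obtain ⟨R, hRk⟩ : ∃ R : ℝ, (k:ℝ) = R := ⟨_, rfl⟩
  rw [hRk] at hR hmR ⊢
  set m : ST n → ℝ := fun p => psi (‖p.2‖ ^ 2 / R ^ 2) * md ε U p with hm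
  have hmc : Continuous m := ((cd_psi R).mul (cd_md hε hs)).continuous
  have hmf : ∀ t x, 2 * R ≤ ‖x‖ → m (t, x) = 0 := by
    intro t x hx; simp only [hm]; rw [(psi_far hR hx).1]; simp
  have hmn : ∀ p, 0 ≤ m p := fun p => mul_nonneg (psi_nonneg _) (hmd0 p)
  have im := (integrable_slab hmc (a := 0) (b := R) (ρ := 2 * R) fun t _ x hx => hmf t x hx).integral_prod_left
  have i1 : ∀ t, Integrable (fun x => m (t, x)) := fun t =>
      (hmc.comp (by fun_prop : Continuous fun x : Eucl n => ((t, x) : ST n))).integrable_of_hasCompactSupport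
        (hasCompactSupport_of_ball (hmf t))
  calc ∫⁻ t in Ioc 0 R, ∫⁻ x in Metric.closedBall (0 : Eucl n) R, ENNReal.ofReal (Td ε U (t, x))
      ≤ ∫⁻ t in Ioc 0 R, ENNReal.ofReal (2 * ∫ x, m (t, x)) := by
        refine lintegral_mono fun t => ?_
        rw [← integral_const_mul, ofReal_integral_eq_lintegral_ofReal ((i1 t).const_mul 2)
          (ae_of_all _ fun x => mul_nonneg two_pos.le (hmn _))]
        refine le_trans ?_ (setLIntegral_le_lintegral (Metric.closedBall (0 : Eucl n) R) _)
        refine setLIntegral_mono' Metric.isClosed_closedBall.measurableSet fun x hx => ?_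
        refine ENNReal.ofReal_le_ofReal ?_
        rw [mem_closedBall_zero_iff] at hx
        simp only [hm]
        rw [psi_one, one_mul]
        · exact Td_le hε U (t, x)
        · rw [div_le_one (by positivity)]
          gcongr
    _ = ENNReal.ofReal (2 * ∫ t in Ioc 0 R, ∫ x, m (t, x)) := by
        rw [← integral_const_mul, ofReal_integral_eq_lintegral_ofReal (im.const_mul 2)
          (ae_of_all _ fun t => mul_nonneg two_pos.le (integral_nonneg fun x => hmn _))]
    _ ≤ _ := by
        refine ENNReal.ofReal_le_ofReal ?_
        rw [← intervalIntegral.integral_of_le hR.le]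
        have : ∫ t in (0:ℝ)..R, ∫ x, m (t, x) ≤ Cn n * ∫ x, en U (0, x) := hmR
        linarith

end

end Mor


namespace Mor

open Set Filter Topology

noncomputable section

variable {n : ℕ}

/-- time reversal map -/
def Lr (n : ℕ) : ST n →L[ℝ] ST n :=
  (-ContinuousLinearMap.fst ℝ ℝ (Eucl n)).prod (ContinuousLinearMap.snd ℝ ℝ (Eucl n))

lemma Lr_apply (p : ST n) : Lr n p = (-p.1, p.2) := by
  simp [Lr]

lemma D_rev {F : ST n → ℝ} (hF : ContDiff ℝ (⊤ : ℕ∞) F) (v p : ST n) :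
    D v (fun q => F (Lr n q)) p = D (Lr n v) F (Lr n p) := by
  have h := ((hF.differentiable (by simp) (Lr n p)).hasFDerivAt).comp p (Lr n).hasFDerivAt
  unfold D
  rw [show (fun q => F (Lr n q)) = F ∘ (Lr n) from rfl, h.fderiv]
  rfl

lemma D_neg_dir (F : ST n → ℝ) (v p : ST n) : D (-v) F p = - D v F p := by
  simp [D]

lemma Lr_eT : Lr n (eT n) = -eT n := by
  rw [Lr_apply]; simp [eT]

lemma Lr_eX (i : Fin n) : Lr n (eX i) = eX i := by
  rw [Lr_apply]; simp [eX]

lemma IsSol.rev {U : ST n → ℝ} (hU : IsSol U) : IsSol (fun q => U (Lr n q)) := by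
  have hs := hU.smooth
  refine ⟨hs.comp (Lr n).contDiff, fun p => ?_⟩
  have h1 : D (eT n) (fun q => U (Lr n q)) = fun q => (fun r => -D (eT n) U r) (Lr n q) := by
    ext q; rw [D_rev hs, Lr_eT, D_neg_dir]
  have h2 : ∀ i : Fin n, D (eX i) (fun q => U (Lr n q)) = fun q => D (eX i) U (Lr n q) := by
    intro i; ext q; rw [D_rev hs, Lr_eX]
  have h3 : ∀ r, D (eT n) (fun r => -D (eT n) U r) r = - D (eT n) (D (eT n) U) r := by
    intro r; unfold D; rw [fderiv_fun_neg]; simp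
  rw [h1, D_rev (contDiff_D hs _).neg, Lr_eT, D_neg_dir, h3, neg_neg, hU.wave]
  refine Finset.sum_congr rfl fun i _ => ?_
  rw [h2, D_rev (contDiff_D hs _), Lr_eX]

lemma Nn_rev {U : ST n → ℝ} (hs : ContDiff ℝ (⊤ : ℕ∞) U) (p : ST n) :
    Nn (fun q => U (Lr n q)) p = Nn U (Lr n p) := by
  unfold Nn
  refine Finset.sum_congr rfl fun i _ => ?_
  rw [D_rev hs, Lr_eX]

lemma en_rev {U : ST n → ℝ} (hs : ContDiff ℝ (⊤ : ℕ∞) U) (p : ST n) :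
    en (fun q => U (Lr n q)) p = en U (Lr n p) := by
  unfold en
  rw [Nn_rev hs, D_rev hs, Lr_eT, D_neg_dir, neg_sq]

lemma Td_rev {U : ST n → ℝ} (hs : ContDiff ℝ (⊤ : ℕ∞) U) (ε : ℝ) (p : ST n) :
    Td ε (fun q => U (Lr n q)) p = Td ε U (Lr n p) := by
  have h2 : (Lr n p).2 = p.2 := by rw [Lr_apply]
  unfold Td ra Aa
  rw [Nn_rev hs, h2]
  simp_rw [D_rev hs, Lr_eX]

lemma mor_real (hn : 3 ≤ n) {ε : ℝ} (hε : 0 < ε) {U : ST n → ℝ} (hU : IsSol U)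
    (h0 : Integrable (fun x => en U (0, x))) :
    ∫⁻ t : ℝ, ∫⁻ x, ENNReal.ofReal (Td ε U (t, x)) ≤
      2 * ENNReal.ofReal (2 * Cn n * ∫ x, en U (0, x)) := by
  have hs := hU.smooth
  have hen : (fun x => en (fun q => U (Lr n q)) (0, x)) = fun x => en U (0, x) := by
    ext x; rw [en_rev hs, Lr_apply]; simp
  have h1 := mor_pos hn hε hU h0
  have h2 := mor_pos hn hε hU.rev (by rw [hen]; exact h0)
  rw [hen] at h2
  simp_rw [Td_rev hs, Lr_apply] at h2
  have h3 : ∫⁻ t in Ioi (0:ℝ), ∫⁻ x, ENNReal.ofReal (Td ε U (-t, x)) =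
      ∫⁻ t in Iio (0:ℝ), ∫⁻ x, ENNReal.ofReal (Td ε U (t, x)) := by
    have := (Measure.measurePreserving_neg (volume : Measure ℝ)).setLIntegral_comp_preimage_emb
      (MeasurableEquiv.neg ℝ).measurableEmbedding
      (fun t => ∫⁻ x, ENNReal.ofReal (Td ε U (t, x))) (Iio 0)
    rw [← this]
    simp
  rw [h3] at h2
  rw [← setLIntegral_univ, ← Iic_union_Ioi (a := (0:ℝ)), two_mul]
  refine (lintegral_union_le _ _ _).trans (add_le_add ?_ h1)
  rwa [setLIntegral_congr Iio_ae_eq_Iic.symm]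

end

end Mor


namespace Mor

open Set Filter Topology

noncomputable section

variable {n : ℕ}

/-- complex directional derivative -/
def DC (v : ST n) (G : ST n → ℂ) : ST n → ℂ := fun p => fderiv ℝ G p v

lemma contDiff_DC {G : ST n → ℂ} (hG : ContDiff ℝ (⊤ : ℕ∞) G) (v : ST n) :
    ContDiff ℝ (⊤ : ℕ∞) (DC v G) := by
  unfold DC
  exact (hG.fderiv_right (by exact_mod_cast le_top)).clm_apply contDiff_const

lemma DC_x {G : ST n → ℂ} (hG : ContDiff ℝ (⊤ : ℕ∞) G) (t : ℝ) (x v : Eucl n) :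
    fderiv ℝ (fun y => G (t, y)) x v = DC (0, v) G (t, x) := by
  have h : HasFDerivAt (fun y : Eucl n => (t, y)) (ContinuousLinearMap.inr ℝ ℝ (Eucl n)) x :=
    hasFDerivAt_prodMk_right t x
  have := (hG.differentiable (by simp) (t, x)).hasFDerivAt.comp x h
  unfold DC
  rw [show (fun y => G (t, y)) = G ∘ (fun y : Eucl n => (t, y)) from rfl, this.fderiv]
  simp

lemma DC_t {G : ST n → ℂ} (hG : ContDiff ℝ (⊤ : ℕ∞) G) (t : ℝ) (x : Eucl n) :
    deriv (fun s => G (s, x)) t = DC (eT n) G (t, x) := by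
  have h : HasFDerivAt (fun s : ℝ => (s, x)) (ContinuousLinearMap.inl ℝ ℝ (Eucl n)) t :=
    hasFDerivAt_prodMk_left t x
  have := ((hG.differentiable (by simp) (t, x)).hasFDerivAt.comp t h).hasDerivAt
  have h2 := this.deriv
  simpa [DC, eT, Function.comp_def] using h2

lemma D_clm (l : ℂ →L[ℝ] ℝ) {G : ST n → ℂ} (hG : ContDiff ℝ (⊤ : ℕ∞) G) (v : ST n) :
    D v (fun p => l (G p)) = fun p => l (DC v G p) := by
  ext p
  have := l.hasFDerivAt.comp p (hG.differentiable (by simp) p).hasFDerivAt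
  unfold D DC
  rw [show (fun p => l (G p)) = l ∘ G from rfl, this.fderiv]
  rfl

section sol
variable {u : ℝ → Eucl n → ℂ} (hu : IsWaveSolution u)
variable (l : ℂ →L[ℝ] ℝ)

lemma isSol_clm {u : ℝ → Eucl n → ℂ} (hu : IsWaveSolution u) (l : ℂ →L[ℝ] ℝ) :
    IsSol (fun p : ST n => l (u p.1 p.2)) := by
  obtain ⟨hs, hw⟩ := hu
  refine ⟨l.contDiff.comp hs, fun p => ?_⟩
  rw [D_clm l hs, D_clm l (contDiff_DC hs _)]
  simp_rw [D_clm l hs]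
  have : ∀ i : Fin n, D (eX i) (fun p => l (DC (eX i) (fun p : ST n => u p.1 p.2) p)) p =
      l (DC (eX i) (DC (eX i) (fun p : ST n => u p.1 p.2)) p) := fun i => by
    rw [D_clm l (contDiff_DC hs _)]
  simp_rw [this, ← map_sum]
  congr 1
  have h := hw p.1 p.2
  have e1 : timeDeriv u = fun t x => DC (eT n) (fun p : ST n => u p.1 p.2) (t, x) := by
    ext t x; exact DC_t hs t x
  rw [e1] at h
  have e2 := DC_t (contDiff_DC hs (eT n)) p.1 p.2
  unfold timeDeriv at h
  rw [e2] at h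
  rw [show p = (p.1, p.2) from rfl, h]
  unfold lapE
  refine Finset.sum_congr rfl fun i _ => ?_
  have e3 : (fun y => fderiv ℝ (u p.1) y (EuclideanSpace.single i (1 : ℝ))) =
      fun y => DC (eX i) (fun p : ST n => u p.1 p.2) (p.1, y) := by
    ext y; exact DC_x hs p.1 y _
  rw [e3, DC_x (contDiff_DC hs _)]
  rfl

end sol

lemma normSq_reim (z : ℂ) : ‖z‖ ^ 2 = reCLM z ^ 2 + imCLM z ^ 2 := by
  rw [← Complex.normSq_eq_norm_sq, Complex.normSq_apply]
  simp; ring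

lemma DC_x_sum {G : ST n → ℂ} (t : ℝ) (x : Eucl n) (c : ℝ) :
    DC (0, c • x) G (t, x) = c • ∑ i, x i • DC (eX i) G (t, x) := by
  unfold DC eX
  have hx : ((0, c • x) : ST n) = c • ∑ i, x i • ((0, EuclideanSpace.single i (1:ℝ)) : ST n) := by
    ext j
    · simp [Prod.fst_sum]
    · simp [Prod.snd_sum, Pi.single_apply]
  rw [hx, map_smul, map_sum]
  simp_rw [map_smul]

/-- real part -/
def Ur (u : ℝ → Eucl n → ℂ) : ST n → ℝ := fun p => reCLM (u p.1 p.2)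
/-- imaginary part -/
def Ui (u : ℝ → Eucl n → ℂ) : ST n → ℝ := fun p => imCLM (u p.1 p.2)

lemma gradSq_eq {u : ℝ → Eucl n → ℂ} (hu : IsWaveSolution u) (t : ℝ) (x : Eucl n) :
    gradSq (u t) x = Nn (Ur u) (t, x) + Nn (Ui u) (t, x) := by
  unfold gradSq Nn Ur Ui
  rw [← Finset.sum_add_distrib]
  refine Finset.sum_congr rfl fun i _ => ?_
  rw [D_clm _ hu.1, D_clm _ hu.1, ← normSq_reim]
  exact congrArg (fun z : ℂ => ‖z‖ ^ 2) (DC_x hu.1 t x _)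

lemma radSq_eq {u : ℝ → Eucl n → ℂ} (hu : IsWaveSolution u) (t : ℝ) (x : Eucl n) :
    radSq (u t) x = ra (Ur u) (t, x) + ra (Ui u) (t, x) := by
  unfold radSq ra Aa Ur Ui
  have := DC_x hu.1 t x (‖x‖⁻¹ • x)
  simp only at this
  rw [this, DC_x_sum, normSq_reim]
  simp_rw [D_clm _ hu.1, map_smul, map_sum, map_smul, smul_eq_mul]

lemma time_eq {u : ℝ → Eucl n → ℂ} (hu : IsWaveSolution u) (t : ℝ) (x : Eucl n) :
    ‖timeDeriv u t x‖ ^ 2 = D (eT n) (Ur u) (t, x) ^ 2 + D (eT n) (Ui u) (t, x) ^ 2 := by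
  unfold Ur Ui
  rw [D_clm _ hu.1, D_clm _ hu.1, ← normSq_reim, ← DC_t hu.1 t x]
  rfl

lemma Cn_nonneg : 0 ≤ Cn n := by
  have h1 : 0 ≤ Mpsi := Mpsi_nonneg
  unfold Cn Lc; positivity

lemma main (hn : 3 ≤ n) {ε : ℝ} (hε : 0 < ε) {u : ℝ → Eucl n → ℂ} (hu : IsWaveSolution u)
    (hfin : (∫⁻ x : Eucl n, ENNReal.ofReal (gradSq (u 0) x)) +
          (∫⁻ x : Eucl n, (‖timeDeriv u 0 x‖₊ : ℝ≥0∞) ^ 2) ≠ ∞) :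
      (∫⁻ t : ℝ, ∫⁻ x : Eucl n,
          ENNReal.ofReal (ε / (ε + ‖x‖) ^ 2) * ENNReal.ofReal (radSq (u t) x) +
            ENNReal.ofReal ((ε + ‖x‖)⁻¹) *
              ENNReal.ofReal (gradSq (u t) x - radSq (u t) x)) ≤
        (2 * ENNReal.ofReal (2 * Cn n)) * ((∫⁻ x : Eucl n, ENNReal.ofReal (gradSq (u 0) x)) +
          ∫⁻ x : Eucl n, (‖timeDeriv u 0 x‖₊ : ℝ≥0∞) ^ 2) := by
  have hr : IsSol (Ur u) := isSol_clm hu reCLM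
  have hi : IsSol (Ui u) := isSol_clm hu imCLM
  have cen : ∀ {U : ST n → ℝ}, IsSol U → Continuous fun x : Eucl n => en U (0, x) := fun h =>
    (contDiff_en h.smooth).continuous.comp (by fun_prop)
  have hE : (∫⁻ x : Eucl n, ENNReal.ofReal (gradSq (u 0) x)) +
          (∫⁻ x : Eucl n, (‖timeDeriv u 0 x‖₊ : ℝ≥0∞) ^ 2) =
      (∫⁻ x, ENNReal.ofReal (en (Ur u) (0, x))) + ∫⁻ x, ENNReal.ofReal (en (Ui u) (0, x)) := by
    rw [← lintegral_add_left (cen hr).measurable.ennreal_ofReal, ← lintegral_add_left]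
    · refine lintegral_congr fun x => ?_
      have e : (‖timeDeriv u 0 x‖₊ : ℝ≥0∞) ^ 2 = ENNReal.ofReal (‖timeDeriv u 0 x‖ ^ 2) := by
        rw [ENNReal.ofReal_pow (norm_nonneg _)]
        simp [enorm]
      have hg : 0 ≤ gradSq (u 0) x := Finset.sum_nonneg fun i _ => sq_nonneg _
      rw [e, ← ENNReal.ofReal_add hg (sq_nonneg _),
        ← ENNReal.ofReal_add (en_nonneg _ _) (en_nonneg _ _), gradSq_eq hu, time_eq hu]
      congr 1; unfold en; ring
    · simp_rw [gradSq_eq hu]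
      refine Measurable.ennreal_ofReal (Continuous.measurable (Continuous.add ?_ ?_))
      · exact (contDiff_Nn hr.smooth).continuous.comp (by fun_prop)
      · exact (contDiff_Nn hi.smooth).continuous.comp (by fun_prop)
  rw [hE] at hfin ⊢
  have int : ∀ {U : ST n → ℝ}, IsSol U → (∫⁻ x, ENNReal.ofReal (en U (0, x))) ≠ ∞ →
      Integrable fun x => en U (0, x) := fun {U} h hf => by
    refine ⟨(cen h).aestronglyMeasurable, ?_⟩
    rw [hasFiniteIntegral_iff_ofReal (ae_of_all _ fun x => en_nonneg _ _)]
    exact hf.lt_top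
  have fin : ∀ {U : ST n → ℝ}, IsSol U → (∫⁻ x, ENNReal.ofReal (en U (0, x))) ≠ ∞ →
      ∫⁻ t : ℝ, ∫⁻ x, ENNReal.ofReal (Td ε U (t, x)) ≤
        (2 * ENNReal.ofReal (2 * Cn n)) * ∫⁻ x, ENNReal.ofReal (en U (0, x)) := by
    intro U h hf
    have i0 := int h hf
    refine (mor_real hn hε h i0).trans ?_
    rw [ENNReal.ofReal_mul (by have := Cn_nonneg (n := n); positivity), ← mul_assoc,
      ofReal_integral_eq_lintegral_ofReal i0 (ae_of_all _ fun x => en_nonneg _ _)]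
  rw [mul_add]
  have hTr := (measurable_Td hr.smooth ε).ennreal_ofReal
  refine le_trans (le_of_eq ?_) (add_le_add (fin hr fun h => hfin (by simp [h]))
    (fin hi fun h => hfin (by simp [h])))
  rw [← lintegral_add_left hTr.lintegral_prod_right']
  refine lintegral_congr fun t => ?_
  rw [← lintegral_add_left (f := fun y => ENNReal.ofReal (Td ε (Ur u) (t, y))) (hTr.comp measurable_prodMk_left)]
  refine lintegral_congr fun x => ?_
  have a1 : 0 ≤ ra (Ur u) (t, x) := sq_nonneg _
  have a2 : 0 ≤ ra (Ui u) (t, x) := sq_nonneg _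
  have b1 := ra_le (Ur u) (t, x)
  have b2 := ra_le (Ui u) (t, x)
  have c : 0 ≤ (Nn (Ur u) (t, x) + Nn (Ui u) (t, x)) - (ra (Ur u) (t, x) + ra (Ui u) (t, x)) := by
    linarith
  rw [gradSq_eq hu, radSq_eq hu, ← ENNReal.ofReal_mul (by positivity),
    ← ENNReal.ofReal_mul (by positivity),
    ← ENNReal.ofReal_add (by positivity) (mul_nonneg (by positivity) c)]
  rw [← ENNReal.ofReal_add (Td_nonneg hε _ _) (Td_nonneg hε _ _)]
  congr 1; unfold Td; ring

end

end Mor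

/-- uniform Morawetz estimate. -/
theorem uniform_morawetz (n : ℕ) (hn : 3 ≤ n) :
    ∃ C : ℝ≥0∞, C ≠ ∞ ∧ ∀ ε : ℝ, 0 < ε →
      ∀ u : ℝ → Eucl n → ℂ, IsWaveSolution u →
      (∫⁻ x : Eucl n, ENNReal.ofReal (gradSq (u 0) x)) +
          (∫⁻ x : Eucl n, (‖timeDeriv u 0 x‖₊ : ℝ≥0∞) ^ 2) ≠ ∞ →
      (∫⁻ t : ℝ, ∫⁻ x : Eucl n,
          ENNReal.ofReal (ε / (ε + ‖x‖) ^ 2) * ENNReal.ofReal (radSq (u t) x) +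
            ENNReal.ofReal ((ε + ‖x‖)⁻¹) *
              ENNReal.ofReal (gradSq (u t) x - radSq (u t) x)) ≤
        C * ((∫⁻ x : Eucl n, ENNReal.ofReal (gradSq (u 0) x)) +
          ∫⁻ x : Eucl n, (‖timeDeriv u 0 x‖₊ : ℝ≥0∞) ^ 2) := by
  refine ⟨2 * ENNReal.ofReal (2 * Mor.Cn n), ENNReal.mul_ne_top (by simp) ENNReal.ofReal_ne_top, ?_⟩
  intro ε hε u hu hfin
  exact Mor.main hn hε hu hfin
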